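/- arXiv:2412.20566 — 4 statements merged into one kernel-verified Lean document; each statement's English description precedes it below -/
import Mathlib

section
/- Let B be a bivector in ℝ_{p,q,r} for which μ ≠ 0 is an eigenvalue (so ±1 ∈ σ(B_μ) where B_μ := B/μ), and suppose the outer tangent ta∧(B_μ) exists. Then the outer exponential factorizes as Λ^{B_μ} = Λ^{B_μ − ta∧(B_μ)} Λ^{ta∧(B_μ)}. -/
/-! Common setup: the real geometric algebra `ℝ_{p,q,r}`, grade projections `⟨·⟩_ℓ`,
the commutator product `×`, the wedge powers `W_j`, the outer exponential and outer
trigonometric functions, the characteristic polynomial data `M_μ`, and the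
complexification `ℂ ⊗ ℝ_{p,q,r}`. -/

noncomputable section

open CliffordAlgebra TensorProduct

/-- The diagonal quadratic form of signature `(p,q,r)` on `ℝⁿ`, `n = p+q+r`:
`p` basis vectors of square `+1`, `q` of square `-1`, `r` of square `0`.
`ℝ_{p,q,r} := CliffordAlgebra (sigQ p q r)`. -/
def sigQ (p q r : ℕ) : QuadraticForm ℝ (Fin (p + q + r) → ℝ) :=
  QuadraticMap.weightedSumSquares ℝ
    (fun i : Fin (p + q + r) => if (i : ℕ) < p then (1 : ℝ) else if (i : ℕ) < p + q then -1 else 0)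

variable {K : Type*} [Field K] [CharZero K] {M : Type*} [AddCommGroup M] [Module K M]

/-- The grade-`ℓ` component `⟨x⟩_ℓ` of an element of a Clifford algebra, obtained by
transporting the grading of the exterior algebra along `CliffordAlgebra.equivExterior`. -/
def gradeProj (Q : QuadraticForm K M) (ℓ : ℕ) (x : CliffordAlgebra Q) : CliffordAlgebra Q :=
  letI : Invertible (2 : K) := invertibleOfNonzero two_ne_zero
  (equivExterior Q).symm
    (DirectSum.decompose (fun n : ℕ => ⋀[K]^n M) (equivExterior Q x) ℓ : ExteriorAlgebra K M)

/-- `x` is homogeneous of grade `ℓ`; in particular `IsGrade Q 2 B` says `B` is a bivector. -/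
def IsGrade (Q : QuadraticForm K M) (ℓ : ℕ) (x : CliffordAlgebra Q) : Prop :=
  gradeProj Q ℓ x = x

/-- The commutator product `x × y := (xy - yx)/2`. -/
def cprod {Q : QuadraticForm K M} (x y : CliffordAlgebra Q) : CliffordAlgebra Q :=
  (2 : K)⁻¹ • (x * y - y * x)

/-- `W_j := (1/j!) ⟨B^j⟩_{2j}`, the normalized `j`-fold wedge power of `B`. -/
def Wj (Q : QuadraticForm K M) (B : CliffordAlgebra Q) (j : ℕ) : CliffordAlgebra Q :=
  ((j.factorial : K)⁻¹) • gradeProj Q (2 * j) (B ^ j)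

/-- `B` has effective dimension `2k`: `k` is the largest integer with `W_k ≠ 0`. -/
def HasEffDim (Q : QuadraticForm K M) (B : CliffordAlgebra Q) (k : ℕ) : Prop :=
  Wj Q B k ≠ 0 ∧ ∀ j, k < j → Wj Q B j = 0

/-- The outer exponential `Λ^B = Σ_{j≥0} W_j`; `n` is any bound beyond which all the `W_j`
vanish (e.g. the dimension of the underlying space), so the sum is complete. -/
def outerExp (Q : QuadraticForm K M) (n : ℕ) (B : CliffordAlgebra Q) : CliffordAlgebra Q :=
  ∑ j ∈ Finset.range (n + 1), Wj Q B j

/-- The outer cosine `co∧(B) := (Λ^B + Λ^{-B})/2`. -/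
def coW (Q : QuadraticForm K M) (n : ℕ) (B : CliffordAlgebra Q) : CliffordAlgebra Q :=
  (2 : K)⁻¹ • (outerExp Q n B + outerExp Q n (-B))

/-- The outer sine `si∧(B) := (Λ^B - Λ^{-B})/2`. -/
def siW (Q : QuadraticForm K M) (n : ℕ) (B : CliffordAlgebra Q) : CliffordAlgebra Q :=
  (2 : K)⁻¹ • (outerExp Q n B - outerExp Q n (-B))

/-- `M_μ := Σ_{j=0}^k (-μ)^{k-j} W_j`; the characteristic polynomial of `B` is
`P_{2k}(μ) = M_μ * reverse M_μ`. -/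
def Mpoly (Q : QuadraticForm K M) (B : CliffordAlgebra Q) (k : ℕ) (μ : K) : CliffordAlgebra Q :=
  ∑ j ∈ Finset.range (k + 1), (-μ) ^ (k - j) • Wj Q B j

/-- The wedge (outer) product, `X ∧ Y := ⟨XY⟩_{i+j}` on homogeneous elements of grades `i`, `j`,
extended bilinearly; `n` bounds the occurring grades. -/
def wedgeProd (Q : QuadraticForm K M) (n : ℕ) (x y : CliffordAlgebra Q) : CliffordAlgebra Q :=
  ∑ i ∈ Finset.range (n + 1), ∑ j ∈ Finset.range (n + 1),
    gradeProj Q (i + j) (gradeProj Q i x * gradeProj Q j y)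

/-- The dot product of two vectors, `u · v = ⟨uv⟩₀ = polar(Q)(u,v)/2`, as a scalar. -/
def vdot (Q : QuadraticForm K M) (u v : M) : K := (2 : K)⁻¹ * QuadraticMap.polar Q u v

/-- The complexified quadratic form of signature `(p,q,r)`. -/
def sigQc (p q r : ℕ) : QuadraticForm ℂ (ℂ ⊗[ℝ] (Fin (p + q + r) → ℝ)) :=
  letI : Invertible (2 : ℝ) := invertibleOfNonzero two_ne_zero
  (sigQ p q r).baseChange ℂ

/-- The canonical embedding of `ℝ_{p,q,r}` into its complexification `ℂ ⊗ ℝ_{p,q,r}`. -/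
def toC (p q r : ℕ) (x : CliffordAlgebra (sigQ p q r)) : CliffordAlgebra (sigQc p q r) :=
  letI : Invertible (2 : ℝ) := invertibleOfNonzero two_ne_zero
  ofBaseChange ℂ (sigQ p q r) ((1 : ℂ) ⊗ₜ x)

/-- `v` is an eigenvector of the bivector `B` with eigenvalue `μ`: `v ≠ 0` and `B × v = μ v`. -/
def IsEigen (Q : QuadraticForm K M) (B : CliffordAlgebra Q) (μ : K) (v : M) : Prop :=
  v ≠ 0 ∧ cprod B (ι Q v) = μ • ι Q v

end

noncomputable section

set_option linter.unusedSectionVars false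
set_option linter.style.haveILetI false

namespace OuterAux

open CliffordAlgebra TensorProduct

variable {K : Type*} [Field K] [CharZero K] {M : Type*} [AddCommGroup M] [Module K M]

/-- vectors inside the exterior algebra -/
abbrev ev (K : Type*) [Field K] {M : Type*} [AddCommGroup M] [Module K M] (v : M) :
    ExteriorAlgebra K M := ExteriorAlgebra.ι K v

/-- contraction in the exterior algebra -/
abbrev ctr (d : Module.Dual K M) : ExteriorAlgebra K M →ₗ[K] ExteriorAlgebra K M :=
  contractLeft (Q := (0 : QuadraticForm K M)) d

/-- the linear identification of the Clifford and exterior algebras -/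
def Phi (Q : QuadraticForm K M) : CliffordAlgebra Q ≃ₗ[K] ExteriorAlgebra K M :=
  letI : Invertible (2 : K) := invertibleOfNonzero two_ne_zero
  equivExterior Q

/-- the bilinear form of `Q` -/
def bl (Q : QuadraticForm K M) : M →ₗ[K] Module.Dual K M :=
  letI : Invertible (2 : K) := invertibleOfNonzero two_ne_zero
  Neg.neg (QuadraticMap.associated (R := K) (M := M) (-Q))

theorem gradeProj_eq (Q : QuadraticForm K M) (l : ℕ) (x : CliffordAlgebra Q) :
    gradeProj Q l x = (Phi Q).symm
      (DirectSum.decompose (fun n : ℕ => ⋀[K]^n M) (Phi Q x) l : ExteriorAlgebra K M) := rfl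

theorem Phi_ι_mul (Q : QuadraticForm K M) (v : M) (x : CliffordAlgebra Q) :
    Phi Q (ι Q v * x) = ev K v * Phi Q x + ctr (bl Q v) (Phi Q x) := by
  letI : Invertible (2 : K) := invertibleOfNonzero two_ne_zero
  have := changeForm_ι_mul (changeForm.associated_neg_proof (Q := Q)) v x
  refine this.trans ?_
  have h2 : bl Q v = -(QuadraticMap.associated (R := K) (M := M) (-Q) v) := rfl
  have h3 : ctr (bl Q v) (Phi Q x) =
      - ctr (QuadraticMap.associated (R := K) (M := M) (-Q) v) (Phi Q x) := by
    rw [h2, ctr, ctr, map_neg, LinearMap.neg_apply]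
  rw [h3]
  exact sub_eq_add_neg _ _

theorem Phi_algebraMap (Q : QuadraticForm K M) (r : K) :
    Phi Q (algebraMap K _ r) = algebraMap K _ r :=
  letI : Invertible (2 : K) := invertibleOfNonzero two_ne_zero
  changeForm_algebraMap (changeForm.associated_neg_proof (Q := Q)) r

theorem Phi_one (Q : QuadraticForm K M) : Phi Q 1 = 1 := by
  simpa using Phi_algebraMap Q 1

theorem Phi_ι (Q : QuadraticForm K M) (v : M) : Phi Q (ι Q v) = ev K v :=
  letI : Invertible (2 : K) := invertibleOfNonzero two_ne_zero
  changeForm_ι (changeForm.associated_neg_proof (Q := Q)) v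

theorem bl_apply (Q : QuadraticForm K M) (u v : M) :
    bl Q u v = (2 : K)⁻¹ * QuadraticMap.polar Q u v := by
  letI : Invertible (2 : K) := invertibleOfNonzero two_ne_zero
  change -(QuadraticMap.associated (R := K) (M := M) (-Q) u v) = _
  rw [QuadraticMap.associated_apply, QuadraticMap.polar]
  simp
  ring

theorem bl_comm (Q : QuadraticForm K M) (u v : M) : bl Q u v = bl Q v u := by
  rw [bl_apply, bl_apply, QuadraticMap.polar_comm]

theorem ι_swap (Q : QuadraticForm K M) (u v : M) :
    ι Q u * ι Q v + ι Q v * ι Q u = algebraMap K _ (2 * bl Q u v) := by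
  rw [ι_mul_ι_add_swap, bl_apply]
  simp

theorem ev_sq (v : M) : ev K v * ev K v = 0 := ExteriorAlgebra.ι_sq_zero v

theorem ev_swap (u v : M) : ev K u * ev K v = - (ev K v * ev K u) :=
  eq_neg_of_add_eq_zero_left (ExteriorAlgebra.ι_add_mul_swap u v)

theorem ctr_ev_mul (d : Module.Dual K M) (v : M) (x : ExteriorAlgebra K M) :
    ctr d (ev K v * x) = d v • x - ev K v * ctr d x :=
  contractLeft_ι_mul ..

theorem ctr_ev (d : Module.Dual K M) (v : M) :
    ctr d (ev K v) = algebraMap K _ (d v) :=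
  contractLeft_ι ..

theorem ctr_one (d : Module.Dual K M) : ctr d (1 : ExteriorAlgebra K M) = 0 :=
  contractLeft_one ..

/-- left induction on the exterior algebra -/
theorem ext_induction {P : ExteriorAlgebra K M → Prop}
    (halg : ∀ r : K, P (algebraMap K _ r)) (hadd : ∀ x y, P x → P y → P (x + y))
    (hmul : ∀ x v, P x → P (ev K v * x)) (x) : P x :=
  CliffordAlgebra.left_induction (Q := (0 : QuadraticForm K M)) halg hadd hmul x

/-- The grade involution on the exterior algebra. -/
abbrev einv : ExteriorAlgebra K M →ₐ[K] ExteriorAlgebra K M :=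
  involute (Q := (0 : QuadraticForm K M))

theorem einv_ev (v : M) : einv (ev K v) = - ev K v := involute_ι _

theorem einv_ctr (d : Module.Dual K M) (x : ExteriorAlgebra K M) :
    einv (ctr d x) = - ctr d (einv x) := by
  induction x using ext_induction with
  | halg r => 
    have h : ctr d (algebraMap K (ExteriorAlgebra K M) r) = 0 := contractLeft_algebraMap ..
    rw [AlgHom.commutes, h]; simp
  | hadd x y hx hy => simp only [map_add, hx, hy, neg_add]
  | hmul x v hx =>
    rw [ctr_ev_mul, map_mul, einv_ev, neg_mul, map_neg, ctr_ev_mul, map_sub, map_mul, hx, einv_ev,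
      map_smul]
    simp

theorem Phi_involute (Q : QuadraticForm K M) (x : CliffordAlgebra Q) :
    Phi Q (involute x) = einv (Phi Q x) := by
  induction x using CliffordAlgebra.left_induction with
  | algebraMap r => rw [AlgHom.commutes, Phi_algebraMap, AlgHom.commutes]
  | add x y hx hy => simp only [map_add, hx, hy]
  | ι_mul x v hx =>
    rw [map_mul, involute_ι, neg_mul, map_neg, Phi_ι_mul, Phi_ι_mul, hx, map_add, map_mul,
      einv_ev, einv_ctr]
    rw [neg_add, neg_mul]

theorem Phi_mul_ι (Q : QuadraticForm K M) (v : M) (x : CliffordAlgebra Q) :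
    Phi Q (x * ι Q v) = ev K v * Phi Q (involute x) - ctr (bl Q v) (Phi Q (involute x)) := by
  induction x using CliffordAlgebra.left_induction with
  | algebraMap r =>
    have h : ctr (bl Q v) (algebraMap K (ExteriorAlgebra K M) r) = 0 := contractLeft_algebraMap ..
    rw [AlgHom.commutes, Phi_algebraMap, h, ← Algebra.smul_def, map_smul, Phi_ι, sub_zero,
      ← Algebra.commutes, ← Algebra.smul_def]
  | add x y hx hy => rw [add_mul, map_add, hx, hy]; simp only [map_add, mul_add]; abel
  | ι_mul x u hx =>
    rw [mul_assoc, Phi_ι_mul, hx, map_mul, involute_ι, neg_mul, map_neg, Phi_ι_mul]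
    generalize Phi Q (involute x) = y
    have hc : ctr (bl Q v) (ctr (bl Q u) y) = - ctr (bl Q u) (ctr (bl Q v) y) :=
      contractLeft_comm ..
    simp only [mul_add, mul_sub, map_add, map_sub, mul_neg, map_neg, ctr_ev_mul, hc, bl_comm Q v u]
    rw [← mul_assoc, ← mul_assoc, ev_swap u v, neg_mul]
    abel

theorem two_ev_mul_Phi (Q : QuadraticForm K M) (v : M) (x : CliffordAlgebra Q) :
    (2 : K) • (ev K v * Phi Q x) = Phi Q (ι Q v * x) + Phi Q (involute x * ι Q v) := by
  rw [Phi_ι_mul, Phi_mul_ι, involute_involute, two_smul]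
  abel

/-- induction on bivectors -/
theorem biv_induction {P : ExteriorAlgebra K M → Prop}
    (hmul : ∀ u v, P (ev K u * ev K v)) (hadd : ∀ x y, P x → P y → P (x + y))
    {b : ExteriorAlgebra K M} (hb : b ∈ ⋀[K]^2 M) : P b := by
  have hb' : b ∈ LinearMap.range (ExteriorAlgebra.ι K (M := M)) *
      LinearMap.range (ExteriorAlgebra.ι K (M := M)) := by
    rw [← pow_two]; exact hb
  induction hb' using Submodule.mul_induction_on' with
  | mem_mul_mem m hm n hn =>
    obtain ⟨u, rfl⟩ := hm
    obtain ⟨v, rfl⟩ := hn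
    exact hmul u v
  | add x hx y hy h1 h2 =>
    refine hadd _ _ (h1 ?_) (h2 ?_)
    · rw [← pow_two] at hx; exact hx
    · rw [← pow_two] at hy; exact hy

theorem biv_central {b : ExteriorAlgebra K M} (hb : b ∈ ⋀[K]^2 M) (x : ExteriorAlgebra K M) :
    b * x = x * b := by
  refine biv_induction (P := fun b => b * x = x * b) ?_ ?_ hb
  rotate_left
  · intro y z hy hz; rw [add_mul, mul_add, hy, hz]
  · intro u v
    induction x using ext_induction with
    | halg r => exact (Algebra.commutes _ _).symm
    | hadd x y hx hy => rw [add_mul, mul_add, hx, hy]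
    | hmul x w hx =>
      rw [mul_assoc (ev K w), ← hx, ← mul_assoc, ← mul_assoc]
      congr 1
      rw [mul_assoc, ev_swap v w, mul_neg, ← mul_assoc, ev_swap u w, neg_mul, neg_neg, mul_assoc]

theorem biv_ctr_mul {b : ExteriorAlgebra K M} (hb : b ∈ ⋀[K]^2 M) (d : Module.Dual K M)
    (x : ExteriorAlgebra K M) : ctr d (b * x) = ctr d b * x + b * ctr d x := by
  refine biv_induction (P := fun b => ctr d (b * x) = ctr d b * x + b * ctr d x) ?_ ?_ hb
  rotate_left
  · intro y z hy hz; simp only [add_mul, map_add, hy, hz]; abel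
  · intro u v
    rw [mul_assoc, ctr_ev_mul, ctr_ev_mul, ctr_ev_mul, ctr_ev, mul_sub, sub_mul, ← mul_assoc,
      smul_mul_assoc, Algebra.smul_def (d v), mul_assoc (ev K u) (algebraMap K _ (d v)) x,
      mul_assoc (ev K u) (ev K v)]
    abel

theorem biv_ctr_mem {b : ExteriorAlgebra K M} (hb : b ∈ ⋀[K]^2 M) (d : Module.Dual K M) :
    ∃ w, ctr d b = ev K w := by
  refine biv_induction (P := fun b => ∃ w, ctr d b = ev K w) ?_ ?_ hb
  rotate_left
  · intro x y hx hy
    obtain ⟨a, ha⟩ := hx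
    obtain ⟨c, hc⟩ := hy
    exact ⟨a + c, by rw [map_add, ha, hc, ev, ev, ev, map_add]⟩
  · intro u v
    refine ⟨d u • v - d v • u, ?_⟩
    rw [ctr_ev_mul, ctr_ev, ev, ev, ev, ← Algebra.commutes, ← Algebra.smul_def, map_sub, map_smul,
      map_smul]

theorem biv_einv {b : ExteriorAlgebra K M} (hb : b ∈ ⋀[K]^2 M) : einv b = b := by
  refine biv_induction (P := fun b => einv b = b) ?_ ?_ hb
  rotate_left
  · intro x y hx hy; rw [map_add, hx, hy]
  · intro u v; rw [map_mul, einv_ev, einv_ev, neg_mul_neg]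

/-- The action of a bivector on vectors. -/
def act (Q : QuadraticForm K M) (b : ExteriorAlgebra K M) : M →ₗ[K] M where
  toFun v := ExteriorAlgebra.ιInv (R := K) (ctr (bl Q v) b)
  map_add' u v := by simp [ctr]
  map_smul' r u := by simp [ctr]

theorem ev_act (Q : QuadraticForm K M) {b : ExteriorAlgebra K M} (hb : b ∈ ⋀[K]^2 M) (v : M) :
    ev K (act Q b v) = ctr (bl Q v) b := by
  obtain ⟨w, hw⟩ := biv_ctr_mem hb (bl Q v)
  change ev K (ExteriorAlgebra.ιInv (R := K) (ctr (bl Q v) b)) = _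
  rw [hw, ev, ExteriorAlgebra.ι_leftInverse]

theorem ctr_mem_zero (d : Module.Dual K M) {x : ExteriorAlgebra K M} (hx : x ∈ ⋀[K]^0 M) :
    ctr d x = 0 := by
  have hx' : x ∈ (LinearMap.range (ExteriorAlgebra.ι K (M := M))) ^ 0 := hx
  rw [pow_zero, Submodule.mem_one] at hx'
  obtain ⟨r, rfl⟩ := hx'
  exact contractLeft_algebraMap ..

theorem ev_mul_mem (v : M) {n : ℕ} {x : ExteriorAlgebra K M} (hx : x ∈ ⋀[K]^n M) :
    ev K v * x ∈ ⋀[K]^(n + 1) M := by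
  have hx' : x ∈ (LinearMap.range (ExteriorAlgebra.ι K (M := M))) ^ n := hx
  change _ ∈ (LinearMap.range (ExteriorAlgebra.ι K (M := M))) ^ (n + 1)
  rw [pow_succ']
  exact Submodule.mul_mem_mul ⟨v, rfl⟩ hx'

theorem ctr_mem_succ (d : Module.Dual K M) (n : ℕ) : ∀ {x : ExteriorAlgebra K M},
    x ∈ ⋀[K]^(n + 1) M → ctr d x ∈ ⋀[K]^n M := by
  induction n with
  | zero =>
    intro x hx
    have hx' : x ∈ (LinearMap.range (ExteriorAlgebra.ι K (M := M))) ^ (0 + 1) := hx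
    rw [zero_add, pow_one] at hx'
    obtain ⟨v, rfl⟩ := hx'
    change _ ∈ (LinearMap.range (ExteriorAlgebra.ι K (M := M))) ^ 0
    rw [pow_zero, Submodule.mem_one]
    exact ⟨d v, (ctr_ev d v).symm⟩
  | succ n ih =>
    intro x hx
    have hx' : x ∈ (LinearMap.range (ExteriorAlgebra.ι K (M := M))) *
      (LinearMap.range (ExteriorAlgebra.ι K (M := M))) ^ (n + 1) := by
      rw [← pow_succ']; exact hx
    clear hx
    induction hx' using Submodule.mul_induction_on' with
    | mem_mul_mem m hm y hy =>
      obtain ⟨v, rfl⟩ := hm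
      change ctr d (ev K v * y) ∈ _
      rw [ctr_ev_mul]
      exact Submodule.sub_mem _ (Submodule.smul_mem _ _ hy) (ev_mul_mem v (ih hy))
    | add x _ y _ h1 h2 => rw [map_add]; exact Submodule.add_mem _ h1 h2

/-- elements of degree less than `m` -/
def G (K : Type*) [Field K] (M : Type*) [AddCommGroup M] [Module K M] (m : ℕ) :
    Submodule K (ExteriorAlgebra K M) := ⨆ i : Fin m, ⋀[K]^(i : ℕ) M

theorem mem_G {i m : ℕ} (h : i < m) {x : ExteriorAlgebra K M} (hx : x ∈ ⋀[K]^i M) :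
    x ∈ G K M m :=
  Submodule.mem_iSup_of_mem (p := fun i : Fin m => ⋀[K]^(i : ℕ) M) ⟨i, h⟩ hx

theorem G_induction {m : ℕ} {N : Submodule K (ExteriorAlgebra K M)}
    (h : ∀ i < m, ∀ x ∈ ⋀[K]^i M, x ∈ N) {x : ExteriorAlgebra K M} (hx : x ∈ G K M m) : x ∈ N := by
  have : G K M m ≤ N := iSup_le fun i y hy => h i i.2 y hy
  exact this hx

theorem G_mono {m n : ℕ} (h : m ≤ n) {x : ExteriorAlgebra K M} (hx : x ∈ G K M m) : x ∈ G K M n :=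
  G_induction (fun _ hi _ hy => mem_G (hi.trans_le h) hy) hx

theorem ev_mul_G (v : M) {m : ℕ} {x : ExteriorAlgebra K M} (hx : x ∈ G K M m) :
    ev K v * x ∈ G K M (m + 1) :=
  G_induction (N := (G K M (m + 1)).comap (LinearMap.mulLeft K (ev K v)))
    (fun _ hi _ hy => mem_G (Nat.succ_lt_succ hi) (ev_mul_mem v hy)) hx

theorem ctr_G (d : Module.Dual K M) {m : ℕ} {x : ExteriorAlgebra K M} (hx : x ∈ G K M (m + 1)) :
    ctr d x ∈ G K M m := by
  refine G_induction (N := (G K M m).comap (ctr d)) (fun i hi y hy => ?_) hx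
  rw [Submodule.mem_comap]
  cases i with
  | zero => rw [ctr_mem_zero d hy]; exact Submodule.zero_mem _
  | succ i => exact mem_G (Nat.lt_of_succ_lt_succ hi) (ctr_mem_succ d i hy)

theorem decompose_G {m : ℕ} {x : ExteriorAlgebra K M} (hx : x ∈ G K M m) :
    (DirectSum.decompose (fun n : ℕ => ⋀[K]^n M) x m : ExteriorAlgebra K M) = 0 := by
  refine G_induction (N := LinearMap.ker ((⋀[K]^m M).subtype ∘ₗ (DirectSum.component K ℕ (fun n => ⋀[K]^n M) m) ∘ₗ (DirectSum.decomposeLinearEquiv (fun n : ℕ => ⋀[K]^n M)).toLinearMap)) (fun i hi y hy => ?_) hx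
  exact DirectSum.decompose_of_mem_ne (fun n : ℕ => ⋀[K]^n M) hy hi.ne

theorem Phi_symm_ev_mul_ev (Q : QuadraticForm K M) (u v : M) :
    (Phi Q).symm (ev K u * ev K v) = ι Q u * ι Q v - algebraMap K _ (bl Q u v) := by
  rw [LinearEquiv.symm_apply_eq, map_sub, Phi_ι_mul, Phi_ι, Phi_algebraMap, ctr_ev]
  simp

theorem Phi_biv_mul (Q : QuadraticForm K M) {b : ExteriorAlgebra K M} (hb : b ∈ ⋀[K]^2 M)
    {m : ℕ} (x : CliffordAlgebra Q) (y : ExteriorAlgebra K M) (hy : y ∈ ⋀[K]^m M)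
    (h : Phi Q x - y ∈ G K M m) : Phi Q ((Phi Q).symm b * x) - b * y ∈ G K M (m + 2) := by
  have hx : Phi Q x ∈ G K M (m + 1) := by
    rw [← sub_add_cancel (Phi Q x) y]
    exact Submodule.add_mem _ (G_mono (Nat.le_succ m) h) (mem_G (Nat.lt_succ_self m) hy)
  refine biv_induction
    (P := fun b => Phi Q ((Phi Q).symm b * x) - b * y ∈ G K M (m + 2)) ?_ ?_ hb
  · intro u v
    have e : Phi Q ((Phi Q).symm (ev K u * ev K v) * x) - ev K u * ev K v * y
        = ev K u * (ev K v * (Phi Q x - y)) + ev K u * ctr (bl Q v) (Phi Q x)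
          + ctr (bl Q u) (ev K v * Phi Q x) + ctr (bl Q u) (ctr (bl Q v) (Phi Q x))
          - bl Q u v • Phi Q x := by
      rw [Phi_symm_ev_mul_ev, sub_mul, map_sub, mul_assoc, Phi_ι_mul, Phi_ι_mul,
        ← Algebra.smul_def, map_smul]
      simp only [mul_add, mul_sub, map_add, mul_assoc]
      abel
    rw [e]
    refine Submodule.sub_mem _ (Submodule.add_mem _ (Submodule.add_mem _ (Submodule.add_mem _
      ?_ ?_) ?_) ?_) (Submodule.smul_mem _ _ (G_mono (by omega) hx))
    · exact ev_mul_G _ (ev_mul_G _ h)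
    · exact G_mono (by omega) (ev_mul_G u (ctr_G (bl Q v) hx))
    · exact G_mono (by omega) (ctr_G _ (ev_mul_G v hx))
    · exact G_mono (by omega) (ctr_G (bl Q u) (G_mono (Nat.le_succ m) (ctr_G (bl Q v) hx)))
  · intro b c hb hc
    have e : Phi Q ((Phi Q).symm (b + c) * x) - (b + c) * y
      = (Phi Q ((Phi Q).symm b * x) - b * y) + (Phi Q ((Phi Q).symm c * x) - c * y) := by
      simp only [map_add, add_mul]; abel
    rw [e]
    exact Submodule.add_mem _ hb hc

theorem biv_pow_mem {b : ExteriorAlgebra K M} (hb : b ∈ ⋀[K]^2 M) (j : ℕ) :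
    b ^ j ∈ ⋀[K]^(2 * j) M := by
  have hb' : b ∈ (LinearMap.range (ExteriorAlgebra.ι K (M := M))) ^ 2 := hb
  change _ ∈ (LinearMap.range (ExteriorAlgebra.ι K (M := M))) ^ (2 * j)
  rw [pow_mul]
  exact Submodule.pow_mem_pow _ hb' j

theorem Phi_pow (Q : QuadraticForm K M) {B : CliffordAlgebra Q} (hB : Phi Q B ∈ ⋀[K]^2 M) (j : ℕ) :
    Phi Q (B ^ j) - (Phi Q B) ^ j ∈ G K M (2 * j) := by
  induction j with
  | zero => rw [pow_zero, pow_zero, Phi_one, sub_self]; exact Submodule.zero_mem _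
  | succ j ih =>
    have := Phi_biv_mul Q hB (B ^ j) _ (biv_pow_mem hB j) ih
    rw [LinearEquiv.symm_apply_apply, ← pow_succ', ← pow_succ'] at this
    exact this

theorem Phi_Wj (Q : QuadraticForm K M) {B : CliffordAlgebra Q} (hB : Phi Q B ∈ ⋀[K]^2 M) (j : ℕ) :
    Phi Q (Wj Q B j) = ((j.factorial : K)⁻¹) • (Phi Q B) ^ j := by
  rw [Wj, map_smul, gradeProj_eq, LinearEquiv.apply_symm_apply]
  congr 1
  have h1 := decompose_G (Phi_pow Q hB j)
  rw [DirectSum.decompose_sub] at h1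
  have h2 := DirectSum.decompose_of_mem_same (fun n : ℕ => ⋀[K]^n M) (biv_pow_mem hB j)
  rw [DirectSum.sub_apply, AddSubgroupClass.coe_sub, h2, sub_eq_zero] at h1
  exact h1

theorem isGrade_iff (Q : QuadraticForm K M) (B : CliffordAlgebra Q) (l : ℕ) (h : IsGrade Q l B) :
    Phi Q B ∈ ⋀[K]^l M := by
  rw [IsGrade, gradeProj_eq, LinearEquiv.symm_apply_eq] at h
  rw [← h]
  exact Subtype.property _

/-- truncated exponential in the exterior algebra -/
def E (n : ℕ) (b : ExteriorAlgebra K M) : ExteriorAlgebra K M :=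
  ∑ j ∈ Finset.range (n + 1), ((j.factorial : K)⁻¹) • b ^ j

theorem Phi_outerExp (Q : QuadraticForm K M) {B : CliffordAlgebra Q} (hB : Phi Q B ∈ ⋀[K]^2 M)
    (n : ℕ) : Phi Q (outerExp Q n B) = E n (Phi Q B) := by
  rw [outerExp, E, map_sum]
  exact Finset.sum_congr rfl fun j _ => Phi_Wj Q hB j

theorem biv_pow_zero [FiniteDimensional K M] {n : ℕ} (hn : Module.finrank K M ≤ n)
    {b : ExteriorAlgebra K M} (hb : b ∈ ⋀[K]^2 M) : b ^ (n + 1) = 0 := by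
  have h := biv_pow_mem hb (n + 1)
  have hr : Module.finrank K (⋀[K]^(2 * (n + 1)) M) = 0 := by
    rw [exteriorPower.finrank_eq, Nat.choose_eq_zero_of_lt (by omega)]
  have hfin : Module.Finite K (⋀[K]^(2 * (n + 1)) M) := inferInstance
  rw [Submodule.finrank_eq_zero] at hr
  rw [hr] at h
  exact (Submodule.mem_bot K).1 h

theorem E_add [FiniteDimensional K M] {n : ℕ} (hn : Module.finrank K M ≤ n)
    {b c : ExteriorAlgebra K M} (hb : b ∈ ⋀[K]^2 M) (hc : c ∈ ⋀[K]^2 M) :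
    E n (b + c) = E n b * E n c := by
  letI : Module ℚ (ExteriorAlgebra K M) := Module.compHom _ (algebraMap ℚ K)
  have key : ∀ x ∈ ⋀[K]^2 M, E n x = IsNilpotent.exp x := by
    intro x hx
    rw [IsNilpotent.exp_eq_sum (biv_pow_zero hn hx), E]
    refine Finset.sum_congr rfl fun j _ => ?_
    change _ = (algebraMap ℚ K ((j.factorial : ℚ)⁻¹)) • x ^ j
    simp
  rw [key _ hb, key _ hc, key _ (Submodule.add_mem _ hb hc)]
  exact IsNilpotent.exp_add_of_commute (biv_central hb c) ⟨_, biv_pow_zero hn hb⟩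
    ⟨_, biv_pow_zero hn hc⟩

theorem E_zero (n : ℕ) : E n (0 : ExteriorAlgebra K M) = 1 := by
  rw [E, Finset.sum_range_succ']
  simp

theorem E_neg_mul [FiniteDimensional K M] {n : ℕ} (hn : Module.finrank K M ≤ n)
    {b : ExteriorAlgebra K M} (hb : b ∈ ⋀[K]^2 M) : E n (-b) * E n b = 1 := by
  rw [← E_add hn (Submodule.neg_mem _ hb) hb, neg_add_cancel, E_zero]

theorem E_sq_zero {n : ℕ} (hn : 1 ≤ n) {b : ExteriorAlgebra K M} (hb : b * b = 0) :
    E n b = 1 + b := by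
  obtain ⟨m, rfl⟩ := Nat.exists_eq_add_of_le hn
  rw [E, add_comm 1 m, Finset.sum_range_succ', Finset.sum_range_succ', Finset.sum_eq_zero]
  · simp [add_comm]
  · intro j _
    rw [pow_add, pow_add, pow_one, mul_assoc, hb]; simp

theorem ctr_pow {b : ExteriorAlgebra K M} (hb : b ∈ ⋀[K]^2 M) (d : Module.Dual K M) (j : ℕ) :
    ctr d (b ^ (j + 1)) = ((j + 1 : ℕ) : K) • (ctr d b * b ^ j) := by
  induction j with
  | zero => simp
  | succ j ih =>
    rw [pow_succ', biv_ctr_mul hb, ih, mul_smul_comm, ← mul_assoc, biv_central hb, mul_assoc,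
      ← pow_succ']
    push_cast
    simp only [add_smul, one_smul]
    abel

theorem ctr_E [FiniteDimensional K M] {n : ℕ} (hn : Module.finrank K M ≤ n)
    {b : ExteriorAlgebra K M} (hb : b ∈ ⋀[K]^2 M) (d : Module.Dual K M) :
    ctr d (E n b) = ctr d b * E n b := by
  have h0 : ctr d b * b ^ n = 0 := by
    have := ctr_pow hb d n
    rw [biv_pow_zero hn hb, map_zero] at this
    exact (smul_eq_zero.1 this.symm).resolve_left (by exact_mod_cast Nat.succ_ne_zero n)
  rw [E, map_sum, Finset.sum_range_succ', Finset.sum_range_succ, mul_add, mul_smul_comm, h0,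
    pow_zero, map_smul, ctr_one, smul_zero, smul_zero, Finset.mul_sum]
  congr 1
  refine Finset.sum_congr rfl fun j _ => ?_
  rw [map_smul, ctr_pow hb, mul_smul_comm, smul_smul, Nat.factorial_succ]
  congr 1
  push_cast
  have : (j : K) + 1 ≠ 0 := by exact_mod_cast Nat.succ_ne_zero j
  field_simp

theorem E_einv {b : ExteriorAlgebra K M} (hb : b ∈ ⋀[K]^2 M) (n : ℕ) : einv (E n b) = E n b := by
  rw [E, map_sum]
  refine Finset.sum_congr rfl fun j _ => ?_
  rw [map_smul, map_pow, biv_einv hb]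

theorem act_neg (Q : QuadraticForm K M) (b : ExteriorAlgebra K M) (v : M) :
    act Q (-b) v = - act Q b v := by
  change ExteriorAlgebra.ιInv (R := K) (ctr (bl Q v) (-b)) = -ExteriorAlgebra.ιInv (R := K) _
  rw [map_neg, map_neg]

section core

variable [FiniteDimensional K M] (Q : QuadraticForm K M) {n : ℕ}

theorem involute_outerExp {B : CliffordAlgebra Q} (hB : Phi Q B ∈ ⋀[K]^2 M) :
    involute (outerExp Q n B) = outerExp Q n B := by
  apply (Phi Q).injective
  rw [Phi_involute, Phi_outerExp Q hB, E_einv hB]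

theorem Phi_vL (hn : Module.finrank K M ≤ n)
    {B : CliffordAlgebra Q} (hB : Phi Q B ∈ ⋀[K]^2 M)
    (v : M) : Phi Q (ι Q v * outerExp Q n B)
    = ev K (v + act Q (Phi Q B) v) * E n (Phi Q B) := by
  rw [Phi_ι_mul, Phi_outerExp Q hB, ctr_E hn hB, ← ev_act Q hB, ← add_mul, ev, ev, ev, map_add]

theorem Phi_Lv (hn : Module.finrank K M ≤ n)
    {B : CliffordAlgebra Q} (hB : Phi Q B ∈ ⋀[K]^2 M)
    (v : M) : Phi Q (outerExp Q n B * ι Q v)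
    = ev K (v - act Q (Phi Q B) v) * E n (Phi Q B) := by
  rw [Phi_mul_ι, involute_outerExp Q hB, Phi_outerExp Q hB, ctr_E hn hB, ← ev_act Q hB, ← sub_mul,
    ev, ev, ev, map_sub]

theorem left_ideal_one (hn : Module.finrank K M ≤ n)
    {B : CliffordAlgebra Q} (hB : Phi Q B ∈ ⋀[K]^2 M)
    {S : Submodule K (ExteriorAlgebra K M)} (hE : E n (Phi Q B) ∈ S)
    (hS : ∀ w, ∀ z ∈ S, ev K w * z ∈ S) : (1 : ExteriorAlgebra K M) ∈ S := by
  have h : ∀ x : ExteriorAlgebra K M, ∀ z ∈ S, x * z ∈ S := by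
    intro x
    induction x using ext_induction with
    | halg r => intro z hz; rw [← Algebra.smul_def]; exact S.smul_mem _ hz
    | hadd x y hx hy => intro z hz; rw [add_mul]; exact S.add_mem (hx z hz) (hy z hz)
    | hmul x v hx => intro z hz; rw [mul_assoc]; exact hS _ _ (hx z hz)
  rw [← E_neg_mul hn hB]
  exact h _ _ hE

theorem left_inv (hn : Module.finrank K M ≤ n)
    {B : CliffordAlgebra Q} (hB : Phi Q B ∈ ⋀[K]^2 M)
    (hs : ∀ w, ∃ v, v + act Q (Phi Q B) v = w) : ∃ y, y * outerExp Q n B = 1 := by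
  have h1 := left_ideal_one Q hn hB
    (S := LinearMap.range ((Phi Q).toLinearMap ∘ₗ LinearMap.mulRight K (outerExp Q n B)))
    ⟨1, by simp [Phi_outerExp Q hB]⟩ ?_
  · obtain ⟨y, hy⟩ := h1
    refine ⟨y, (Phi Q).injective ?_⟩
    rw [Phi_one]; exact hy
  · rintro w _ ⟨y, rfl⟩
    obtain ⟨v, hv⟩ := hs (w - act Q (Phi Q B) w)
    have hc : outerExp Q n B * ι Q w = ι Q v * outerExp Q n B := by
      apply (Phi Q).injective
      rw [Phi_vL Q hn hB, Phi_Lv Q hn hB, hv]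
    refine ⟨(2 : K)⁻¹ • (ι Q w * y + involute y * ι Q v), ?_⟩
    have h2 := two_ev_mul_Phi Q w (y * outerExp Q n B)
    rw [map_mul involute, involute_outerExp Q hB, mul_assoc (involute y), hc, ← map_add] at h2
    change Phi Q (_ * outerExp Q n B) = ev K w * Phi Q (y * outerExp Q n B)
    rw [smul_mul_assoc, map_smul, add_mul, mul_assoc, mul_assoc, ← h2, smul_smul]
    simp

theorem right_inv (hn : Module.finrank K M ≤ n)
    {B : CliffordAlgebra Q} (hB : Phi Q B ∈ ⋀[K]^2 M)
    (hs : ∀ w, ∃ v, v - act Q (Phi Q B) v = w) : ∃ y, outerExp Q n B * y = 1 := by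
  have h1 := left_ideal_one Q hn hB
    (S := LinearMap.range ((Phi Q).toLinearMap ∘ₗ LinearMap.mulLeft K (outerExp Q n B)))
    ⟨1, by simp [Phi_outerExp Q hB]⟩ ?_
  · obtain ⟨y, hy⟩ := h1
    refine ⟨y, (Phi Q).injective ?_⟩
    rw [Phi_one]; exact hy
  · rintro w _ ⟨y, rfl⟩
    obtain ⟨v, hv⟩ := hs (w + act Q (Phi Q B) w)
    have hc : ι Q w * outerExp Q n B = outerExp Q n B * ι Q v := by
      apply (Phi Q).injective
      rw [Phi_vL Q hn hB, Phi_Lv Q hn hB, hv]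
    refine ⟨(2 : K)⁻¹ • (ι Q v * y + involute y * ι Q w), ?_⟩
    have h2 := two_ev_mul_Phi Q w (outerExp Q n B * y)
    rw [map_mul involute, involute_outerExp Q hB, ← mul_assoc (ι Q w), hc, mul_assoc, mul_assoc,
      ← map_add] at h2
    change Phi Q (outerExp Q n B * _) = ev K w * Phi Q (outerExp Q n B * y)
    rw [mul_smul_comm, map_smul, mul_add, ← h2, smul_smul]
    simp

theorem finite_cl : Module.Finite K (CliffordAlgebra Q) := by
  have : Module.Finite K (ExteriorAlgebra K M) :=
    Module.Finite.of_basis (Module.finBasis K M).ExteriorAlgebra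
  exact Module.Finite.equiv (Phi Q).symm

theorem nontrivial_cl : Nontrivial (CliffordAlgebra Q) :=
  (Phi Q).symm.injective.nontrivial

theorem mul_one_symm {x y : CliffordAlgebra Q} (h : x * y = 1) : y * x = 1 := by
  have := finite_cl Q
  have hs : Function.Injective (LinearMap.mulLeft K x) := by
    rw [LinearMap.injective_iff_surjective]
    intro z
    exact ⟨y * z, by rw [LinearMap.mulLeft_apply, ← mul_assoc, h, one_mul]⟩
  apply hs
  simp only [LinearMap.mulLeft_apply]
  rw [← mul_assoc, h, one_mul, mul_one]

theorem outerExp_ne_zero (hn : Module.finrank K M ≤ n)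
    {B : CliffordAlgebra Q} (hB : Phi Q B ∈ ⋀[K]^2 M)
    : outerExp Q n B ≠ 0 := by
  intro h
  have h1 := E_neg_mul hn hB
  rw [← Phi_outerExp Q hB, h, map_zero, mul_zero] at h1
  exact zero_ne_one h1

/-- existence of the two eigenvectors -/
theorem exists_eigen (hn : Module.finrank K M ≤ n)
    {B : CliffordAlgebra Q} (hB : Phi Q B ∈ ⋀[K]^2 M)
    (hz : outerExp Q n (-B) * reverse (outerExp Q n (-B)) = 0) :
    (∃ v : M, v ≠ 0 ∧ act Q (Phi Q B) v = v) ∧ (∃ v : M, v ≠ 0 ∧ act Q (Phi Q B) v = -v) := by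
  have hB' : Phi Q (-B) ∈ ⋀[K]^2 M := by rw [map_neg]; exact Submodule.neg_mem _ hB
  have := nontrivial_cl Q
  have hno : ∀ y, y * outerExp Q n (-B) ≠ 1 := by
    intro y hy
    have h0 : reverse (outerExp Q n (-B)) = 0 := by
      rw [← one_mul (reverse _), ← hy, mul_assoc, hz, mul_zero]
    have h1 : outerExp Q n (-B) = 0 := by
      rw [← reverse_reverse (outerExp Q n (-B)), h0, map_zero]
    exact outerExp_ne_zero Q hn hB' h1
  constructor
  · by_contra hcon
    push Not at hcon
    have hinj : Function.Injective (LinearMap.id - act Q (Phi Q B) : M →ₗ[K] M) := by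
      rw [← LinearMap.ker_eq_bot, LinearMap.ker_eq_bot']
      intro v hv
      by_contra hv0
      exact hcon v hv0 (sub_eq_zero.1 hv).symm
    obtain ⟨y, hy⟩ := left_inv Q hn hB' (fun w => by
      obtain ⟨v, hv⟩ := (LinearMap.injective_iff_surjective.1 hinj) w
      refine ⟨v, ?_⟩
      rw [map_neg, act_neg, ← sub_eq_add_neg]; exact hv)
    exact hno y hy
  · by_contra hcon
    push Not at hcon
    have hinj : Function.Injective (LinearMap.id + act Q (Phi Q B) : M →ₗ[K] M) := by
      rw [← LinearMap.ker_eq_bot, LinearMap.ker_eq_bot']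
      intro v hv
      by_contra hv0
      exact hcon v hv0 (eq_neg_of_add_eq_zero_right hv)
    obtain ⟨y, hy⟩ := right_inv Q hn hB' (fun w => by
      obtain ⟨v, hv⟩ := (LinearMap.injective_iff_surjective.1 hinj) w
      refine ⟨v, ?_⟩
      rw [map_neg, act_neg, sub_neg_eq_add]; exact hv)
    exact hno y (mul_one_symm Q hy)

theorem core (hn : Module.finrank K M ≤ n)
    {B : CliffordAlgebra Q} (hB : Phi Q B ∈ ⋀[K]^2 M)
    (hz : outerExp Q n (-B) * reverse (outerExp Q n (-B)) = 0)
    (hco : IsUnit (coW Q n B)) (ta : CliffordAlgebra Q)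
    (hta : ta = siW Q n B * Ring.inverse (coW Q n B)) :
    outerExp Q n B = outerExp Q n (B - ta) * outerExp Q n ta := by
  have hB' : Phi Q (-B) ∈ ⋀[K]^2 M := by rw [map_neg]; exact Submodule.neg_mem _ hB
  obtain ⟨⟨vp, hvp0, hvp⟩, ⟨vm, hvm0, hvm⟩⟩ := exists_eigen Q hn hB hz
  have hLm : ι Q vm * outerExp Q n B = 0 := by
    apply (Phi Q).injective
    rw [Phi_vL Q hn hB, hvm, add_neg_cancel, map_zero, ev, map_zero, zero_mul]
  have hLpr : outerExp Q n B * ι Q vp = 0 := by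
    apply (Phi Q).injective
    rw [Phi_Lv Q hn hB, hvp, sub_self, map_zero, ev, map_zero, zero_mul]
  have hLmr' : outerExp Q n (-B) * ι Q vm = 0 := by
    apply (Phi Q).injective
    rw [Phi_Lv Q hn hB', map_neg, act_neg, hvm, neg_neg, sub_self, map_zero, ev, map_zero, zero_mul]
  -- the pairing does not vanish
  have hc : bl Q vp vm ≠ 0 := by
    intro hc
    have hs := ι_swap Q vp vm
    rw [hc, mul_zero, map_zero] at hs
    have h0 : coW Q n B * (ι Q vp * ι Q vm) = 0 := by
      have e1 : outerExp Q n B * (ι Q vp * ι Q vm) = 0 := by rw [← mul_assoc, hLpr, zero_mul]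
      have e2 : outerExp Q n (-B) * (ι Q vp * ι Q vm) = 0 := by
        rw [eq_neg_of_add_eq_zero_left hs, mul_neg, ← mul_assoc, hLmr', zero_mul, neg_zero]
      rw [coW, smul_mul_assoc, add_mul, e1, e2, add_zero, smul_zero]
    have h1 : ι Q vp * ι Q vm = 0 := (hco.mul_right_eq_zero).1 h0
    have h2 : ev K vp * ev K vm = 0 := by
      have := congrArg (Phi Q) h1
      rw [Phi_ι_mul, Phi_ι, ctr_ev, hc, map_zero, map_zero, add_zero] at this
      exact this
    have h3 : ∀ d : Module.Dual K M, d vp • vm = d vm • vp := by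
      intro d
      have := congrArg (ctr d) h2
      rw [ctr_ev_mul, ctr_ev, map_zero, ← Algebra.commutes, ← Algebra.smul_def, ev, ev, ← map_smul,
        ← map_smul, sub_eq_zero] at this
      exact (ExteriorAlgebra.ι_inj K _ _).1 this
    have h4 : ∀ d : Module.Dual K M, d vp = 0 := by
      intro d
      have e1 := h3 d
      have e2 := congrArg (act Q (Phi Q B)) e1
      rw [map_smul, map_smul, hvp, hvm, smul_neg, ← e1, neg_eq_iff_add_eq_zero, ← two_smul K,
        smul_smul] at e2
      have := (smul_eq_zero.1 e2).resolve_right hvm0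
      exact (mul_eq_zero.1 this).resolve_left two_ne_zero
    exact hvp0 ((Module.forall_dual_apply_eq_zero_iff K vp).1 h4)
  -- rescale
  obtain ⟨wp, hwp, hpair⟩ : ∃ wp : M, act Q (Phi Q B) wp = wp ∧
      ι Q wp * ι Q vm + ι Q vm * ι Q wp = 1 := by
    refine ⟨(2 * bl Q vp vm)⁻¹ • vp, by rw [map_smul, hvp], ?_⟩
    have h2 : (2 * bl Q vp vm) ≠ 0 := mul_ne_zero two_ne_zero hc
    rw [ι_swap, map_smul, LinearMap.smul_apply, smul_eq_mul, mul_left_comm, inv_mul_cancel₀ h2,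
      map_one]
  have hLpr : outerExp Q n B * ι Q wp = 0 := by
    apply (Phi Q).injective
    rw [Phi_Lv Q hn hB, hwp, sub_self, map_zero, ev, map_zero, zero_mul]
  have hLp' : ι Q wp * outerExp Q n (-B) = 0 := by
    apply (Phi Q).injective
    rw [Phi_vL Q hn hB', map_neg, act_neg, hwp, add_neg_cancel, map_zero, ev, map_zero, zero_mul]
  have hPhiLp : Phi Q (ι Q wp * outerExp Q n B) = (2 : K) • (ev K wp * E n (Phi Q B)) := by
    rw [Phi_vL Q hn hB, hwp, ← two_smul K, ev, map_smul, smul_mul_assoc]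
  have hvm2 : ι Q vm * ι Q vm = 0 := by
    have h1 : ι Q vm * ι Q vm * outerExp Q n B = 0 := by rw [mul_assoc, hLm, mul_zero]
    rw [ι_sq_scalar, ← Algebra.smul_def] at h1
    rw [ι_sq_scalar, (smul_eq_zero.1 h1).resolve_right (outerExp_ne_zero Q hn hB), map_zero]
  -- the tangent
  have hta' : ta = ι Q vm * ι Q wp - ι Q wp * ι Q vm := by
    have hsi : siW Q n B = (ι Q vm * ι Q wp - ι Q wp * ι Q vm) * coW Q n B := by
      have e1 : ι Q vm * ι Q wp * outerExp Q n B = outerExp Q n B := by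
        conv_rhs => rw [← one_mul (outerExp Q n B), ← hpair, add_mul, mul_assoc, hLm]
        simp
      have e2 : ι Q wp * ι Q vm * outerExp Q n (-B) = outerExp Q n (-B) := by
        conv_rhs => rw [← one_mul (outerExp Q n (-B)), ← hpair, add_mul, mul_assoc (ι Q vm), hLp']
        simp
      have e3 : ι Q wp * ι Q vm * outerExp Q n B = 0 := by rw [mul_assoc, hLm, mul_zero]
      have e4 : ι Q vm * ι Q wp * outerExp Q n (-B) = 0 := by rw [mul_assoc, hLp', mul_zero]
      rw [siW, coW, mul_smul_comm, mul_add, sub_mul, sub_mul, e1, e2, e3, e4]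
      simp [sub_eq_add_neg]
    rw [hta, hsi, mul_assoc, Ring.mul_inverse_cancel _ hco, mul_one]
  have hPta : Phi Q ta = (2 : K) • (ev K vm * ev K wp) := by
    rw [hta', map_sub, Phi_ι_mul, Phi_ι_mul, Phi_ι, Phi_ι, ctr_ev, ctr_ev, bl_comm Q wp vm,
      ev_swap wp vm, two_smul]
    abel
  have hbiv : ev K vm * ev K wp ∈ ⋀[K]^2 M := by
    have h1 : ev K wp ∈ ⋀[K]^1 M := by
      change _ ∈ (LinearMap.range (ExteriorAlgebra.ι K (M := M))) ^ 1
      rw [pow_one]; exact ⟨wp, rfl⟩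
    exact ev_mul_mem vm h1
  have htaM : Phi Q ta ∈ ⋀[K]^2 M := by rw [hPta]; exact Submodule.smul_mem _ _ hbiv
  have hta2 : Phi Q ta * Phi Q ta = 0 := by
    have : ev K vm * ev K wp * (ev K vm * ev K wp) = 0 := by
      rw [mul_assoc, ← mul_assoc (ev K wp), ev_swap wp vm, neg_mul, mul_neg, mul_assoc (ev K vm),
        ← mul_assoc, ev_sq, zero_mul, neg_zero]
    rw [hPta, smul_mul_smul_comm, this, smul_zero]
  have hn1 : 1 ≤ n := by
    have : Nontrivial M := ⟨vp, 0, hvp0⟩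
    exact (Module.finrank_pos (R := K) (M := M)).trans_le hn
  have hexp_ta : outerExp Q n ta = (2 : K) • (ι Q vm * ι Q wp) := by
    have e : (2 : K) • (ι Q vm * ι Q wp) = 1 + ta := by
      rw [← hpair, hta', two_smul]; abel
    rw [e]
    apply (Phi Q).injective
    rw [Phi_outerExp Q htaM, E_sq_zero hn1 hta2, map_add, Phi_one]
  have hexp_d : outerExp Q n (B - ta) = outerExp Q n B - (2 : K)⁻¹ •
      (ι Q vm * (ι Q wp * outerExp Q n B) - ι Q wp * outerExp Q n B * ι Q vm) := by
    have hd : Phi Q (B - ta) ∈ ⋀[K]^2 M := by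
      rw [map_sub]; exact Submodule.sub_mem _ hB htaM
    apply (Phi Q).injective
    have h2 := two_ev_mul_Phi Q vm (ι Q wp * outerExp Q n B)
    rw [map_mul involute, involute_ι, involute_outerExp Q hB, neg_mul, neg_mul, map_neg, ← sub_eq_add_neg,
      ← map_sub, hPhiLp] at h2
    rw [Phi_outerExp Q hd, map_sub, sub_eq_add_neg, E_add hn hB (Submodule.neg_mem _ htaM),
      E_sq_zero (b := -Phi Q ta) hn1 (by rw [neg_mul_neg, hta2]), map_sub, map_smul, ← h2, Phi_outerExp Q hB,
      smul_smul, inv_mul_cancel₀ two_ne_zero, one_smul, mul_add, mul_one, mul_neg,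
      ← biv_central htaM, hPta, smul_mul_assoc, mul_smul_comm, mul_assoc, sub_eq_add_neg]
  have hLR : outerExp Q n B * (ι Q vm * ι Q wp) = outerExp Q n B := by
    conv_rhs => rw [← mul_one (outerExp Q n B), ← hpair, mul_add, ← mul_assoc, hLpr]
    simp
  have hRL : ι Q vm * (ι Q wp * outerExp Q n B) = outerExp Q n B := by
    conv_rhs => rw [← one_mul (outerExp Q n B), ← hpair, add_mul, mul_assoc, hLm]
    simp [mul_assoc]
  have hmR : ι Q vm * (ι Q vm * ι Q wp) = 0 := by rw [← mul_assoc, hvm2, zero_mul]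
  rw [hexp_ta, hexp_d, mul_smul_comm, sub_mul, hLR, smul_mul_assoc, sub_mul, hRL, hLR,
    mul_assoc _ (ι Q vm), hmR, mul_zero, sub_zero, smul_sub, smul_smul,
    mul_inv_cancel₀ two_ne_zero, one_smul, two_smul, add_sub_cancel_right]

end core

section basechange

variable {V : Type*} [AddCommGroup V] [Module ℝ V]

/-- complexification of the exterior algebra -/
def psi (V : Type*) [AddCommGroup V] [Module ℝ V] :
    ExteriorAlgebra ℝ V →ₐ[ℝ] ExteriorAlgebra ℂ (ℂ ⊗[ℝ] V) :=
  ExteriorAlgebra.lift ℝ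
    ⟨(ExteriorAlgebra.ι ℂ (M := ℂ ⊗[ℝ] V)).restrictScalars ℝ ∘ₗ TensorProduct.mk ℝ ℂ V 1,
      fun v => ExteriorAlgebra.ι_sq_zero (R := ℂ) ((1 : ℂ) ⊗ₜ[ℝ] v)⟩

theorem psi_ev (v : V) : psi V (ev ℝ v) = ev ℂ ((1 : ℂ) ⊗ₜ[ℝ] v) :=
  ExteriorAlgebra.lift_ι_apply ..

theorem psi_algebraMap (r : ℝ) :
    psi V (algebraMap ℝ _ r) = algebraMap ℂ _ (r : ℂ) := by
  rw [AlgHom.commutes]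
  exact IsScalarTower.algebraMap_apply ℝ ℂ _ r

theorem psi_smul (r : ℝ) (x : ExteriorAlgebra ℝ V) : psi V (r • x) = (r : ℂ) • psi V x := by
  rw [Algebra.smul_def, map_mul, psi_algebraMap, ← Algebra.smul_def]

theorem psi_ctr (d : Module.Dual ℝ V) (d' : Module.Dual ℂ (ℂ ⊗[ℝ] V))
    (h : ∀ v, d' ((1 : ℂ) ⊗ₜ[ℝ] v) = (d v : ℂ)) (x : ExteriorAlgebra ℝ V) :
    psi V (ctr d x) = ctr d' (psi V x) := by
  induction x using ext_induction with
  | halg r =>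
    rw [psi_algebraMap, Algebra.algebraMap_eq_smul_one, Algebra.algebraMap_eq_smul_one,
      map_smul (ctr d), map_smul (ctr d'), ctr_one, ctr_one, smul_zero, smul_zero, map_zero]
  | hadd x y hx hy => simp only [map_add, hx, hy]
  | hmul x v hx =>
    rw [ctr_ev_mul, map_sub, psi_smul, map_mul, map_mul, psi_ev, ctr_ev_mul, h, hx]

theorem psi_biv {b : ExteriorAlgebra ℝ V} (hb : b ∈ ⋀[ℝ]^2 V) :
    psi V b ∈ ⋀[ℂ]^2 (ℂ ⊗[ℝ] V) := by
  refine biv_induction (P := fun b => psi V b ∈ ⋀[ℂ]^2 (ℂ ⊗[ℝ] V)) ?_ ?_ hb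
  · intro u v
    rw [map_mul, psi_ev, psi_ev]
    have h1 : ev ℂ ((1 : ℂ) ⊗ₜ[ℝ] v) ∈ ⋀[ℂ]^1 (ℂ ⊗[ℝ] V) := by
      change _ ∈ (LinearMap.range (ExteriorAlgebra.ι ℂ (M := ℂ ⊗[ℝ] V))) ^ 1
      rw [pow_one]; exact ⟨_, rfl⟩
    exact ev_mul_mem _ h1
  · intro x y hx hy
    rw [map_add]; exact Submodule.add_mem _ hx hy

theorem Phi_complex (Q : QuadraticForm ℝ V) (Qc : QuadraticForm ℂ (ℂ ⊗[ℝ] V))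
    (hQ : ∀ v, Qc ((1 : ℂ) ⊗ₜ[ℝ] v) = (Q v : ℂ))
    (f : CliffordAlgebra Q → CliffordAlgebra Qc)
    (hadd : ∀ x y, f (x + y) = f x + f y) (hmul : ∀ x y, f (x * y) = f x * f y)
    (halg : ∀ r : ℝ, f (algebraMap ℝ _ r) = algebraMap ℂ _ (r : ℂ))
    (hι : ∀ v, f (ι Q v) = ι Qc ((1 : ℂ) ⊗ₜ[ℝ] v)) (x : CliffordAlgebra Q) :
    Phi Qc (f x) = psi V (Phi Q x) := by
  induction x using CliffordAlgebra.left_induction with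
  | algebraMap r => rw [halg, Phi_algebraMap, Phi_algebraMap, psi_algebraMap]
  | add x y hx hy => rw [hadd, map_add, hx, hy, map_add, map_add]
  | ι_mul x v hx =>
    rw [hmul, hι, Phi_ι_mul, Phi_ι_mul, map_add, map_mul, psi_ev, hx]
    congr 1
    refine (psi_ctr _ _ (fun u => ?_) _).symm
    rw [bl_apply, bl_apply, QuadraticMap.polar, QuadraticMap.polar, ← TensorProduct.tmul_add,
      hQ, hQ, hQ]
    push_cast
    ring

end basechange

theorem sigQc_tmul (p q r : ℕ) (v : Fin (p + q + r) → ℝ) :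
    sigQc p q r ((1 : ℂ) ⊗ₜ[ℝ] v) = (sigQ p q r v : ℂ) := by
  letI : Invertible (2 : ℝ) := invertibleOfNonzero two_ne_zero
  refine (QuadraticForm.baseChange_tmul (A := ℂ) (sigQ p q r) 1 v).trans ?_
  simp

theorem Phi_toC (p q r : ℕ) (x : CliffordAlgebra (sigQ p q r)) :
    Phi (sigQc p q r) (toC p q r x) = psi _ (Phi (sigQ p q r) x) := by
  letI : Invertible (2 : ℝ) := invertibleOfNonzero two_ne_zero
  refine Phi_complex _ _ (sigQc_tmul p q r) (toC p q r) ?_ ?_ ?_ ?_ x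
  · intro x y
    change ofBaseChange ℂ (sigQ p q r) _ = _
    rw [TensorProduct.tmul_add, map_add]
    rfl
  · intro x y
    change ofBaseChange ℂ (sigQ p q r) _ = _
    have : (1 : ℂ) ⊗ₜ[ℝ] (x * y) = ((1 : ℂ) ⊗ₜ[ℝ] x) * ((1 : ℂ) ⊗ₜ[ℝ] y) := by
      rw [Algebra.TensorProduct.tmul_mul_tmul, mul_one]
    rw [this, map_mul]
    rfl
  · intro s
    have : (1 : ℂ) ⊗ₜ[ℝ] (algebraMap ℝ (CliffordAlgebra (sigQ p q r)) s) = (s : ℂ) ⊗ₜ[ℝ] 1 := by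
      rw [Algebra.algebraMap_eq_smul_one, TensorProduct.tmul_smul, TensorProduct.smul_tmul']
      simp
    change ofBaseChange ℂ (sigQ p q r) _ = _
    rw [this]
    exact ofBaseChange_tmul_one ℂ (sigQ p q r) (s : ℂ)
  · intro v
    exact ofBaseChange_tmul_ι ℂ (sigQ p q r) 1 v

/-- `M_μ` is a multiple of the outer exponential of `-B/μ`. -/
theorem Mpoly_eq (Q : QuadraticForm K M) {B : CliffordAlgebra Q} (hB : Phi Q B ∈ ⋀[K]^2 M)
    {n k : ℕ} (hkn : k ≤ n) (h0 : ∀ j, k < j → (Phi Q B) ^ j = 0) {μ : K} (hμ : μ ≠ 0) :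
    Mpoly Q B k μ = (-μ) ^ k • outerExp Q n (-(μ⁻¹ • B)) := by
  have hμ' : -μ ≠ 0 := neg_ne_zero.2 hμ
  have e : -(μ⁻¹ • B) = (-μ)⁻¹ • B := by rw [inv_neg, neg_smul]
  have hB' : Phi Q ((-μ)⁻¹ • B) ∈ ⋀[K]^2 M := by
    rw [map_smul]; exact Submodule.smul_mem _ _ hB
  apply (Phi Q).injective
  rw [e, map_smul, Phi_outerExp Q hB', E, Mpoly, map_sum, Finset.smul_sum]
  rw [← Finset.sum_subset (Finset.range_mono (Nat.succ_le_succ hkn))]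
  · refine Finset.sum_congr rfl fun j hj => ?_
    have hj' : j ≤ k := Nat.lt_succ_iff.1 (Finset.mem_range.1 hj)
    rw [map_smul, map_smul, Phi_Wj Q hB, smul_pow, smul_smul, smul_smul, smul_smul]
    congr 1
    rw [inv_pow, pow_sub₀ _ hμ' hj']
    ring
  · intro j _ hj
    have hj' : k < j := by
      by_contra hc
      exact hj (Finset.mem_range.2 (Nat.lt_succ_iff.2 (not_lt.1 hc)))
    rw [map_smul, smul_pow, h0 j hj', smul_zero, smul_zero, smul_zero]

end OuterAux

end

open CliffordAlgebra in
/-- if `μ ≠ 0` is an eigenvalue of the bivector `B` (a root of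
`P_{2k}(μ) = M_μ M̃_μ`), `B_μ := B/μ`, and the outer tangent
`ta∧(B_μ) = si∧(B_μ) co∧(B_μ)⁻¹` exists (i.e. `co∧(B_μ)` is invertible), then
`Λ^{B_μ} = Λ^{B_μ - ta∧(B_μ)} Λ^{ta∧(B_μ)}`. -/
theorem outerExp_factor_tan (p q r : ℕ) (B : CliffordAlgebra (sigQ p q r))
    (hB : IsGrade (sigQ p q r) 2 B) (k : ℕ) (hk : HasEffDim (sigQ p q r) B k)
    (μ : ℂ) (hμ : μ ≠ 0)
    (heigen : Mpoly (sigQc p q r) (toC p q r B) k μ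
        * reverse (Mpoly (sigQc p q r) (toC p q r B) k μ) = 0)
    (Bμ : CliffordAlgebra (sigQc p q r)) (hBμ : Bμ = μ⁻¹ • toC p q r B)
    (hco : IsUnit (coW (sigQc p q r) (p + q + r) Bμ))
    (ta : CliffordAlgebra (sigQc p q r))
    (hta : ta = siW (sigQc p q r) (p + q + r) Bμ
        * Ring.inverse (coW (sigQc p q r) (p + q + r) Bμ)) :
    outerExp (sigQc p q r) (p + q + r) Bμ
      = outerExp (sigQc p q r) (p + q + r) (Bμ - ta)
          * outerExp (sigQc p q r) (p + q + r) ta := by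
  have hb : OuterAux.Phi (sigQ p q r) B ∈ ⋀[ℝ]^2 (Fin (p + q + r) → ℝ) :=
    OuterAux.isGrade_iff _ _ _ hB
  have hbc : OuterAux.Phi (sigQc p q r) (toC p q r B) ∈
      ⋀[ℂ]^2 (TensorProduct ℝ ℂ (Fin (p + q + r) → ℝ)) := by
    rw [OuterAux.Phi_toC]; exact OuterAux.psi_biv hb
  have hr : Module.finrank ℝ (Fin (p + q + r) → ℝ) ≤ p + q + r := by simp
  have hc : Module.finrank ℂ (TensorProduct ℝ ℂ (Fin (p + q + r) → ℝ)) ≤ p + q + r := by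
    rw [Module.finrank_baseChange]; exact hr
  have hkn : k ≤ p + q + r := by
    by_contra hlt
    apply hk.1
    apply (OuterAux.Phi (sigQ p q r)).injective
    obtain ⟨m, hm⟩ := Nat.exists_eq_add_of_le (Nat.succ_le_of_lt (not_le.1 hlt))
    rw [OuterAux.Phi_Wj _ hb, hm, Nat.succ_eq_add_one, pow_add, OuterAux.biv_pow_zero hr hb,
      zero_mul, smul_zero, map_zero]
  have h0 : ∀ j, k < j → (OuterAux.Phi (sigQc p q r) (toC p q r B)) ^ j = 0 := by
    intro j hj
    have h1 := congrArg (OuterAux.Phi (sigQ p q r)) (hk.2 j hj)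
    rw [OuterAux.Phi_Wj _ hb, map_zero] at h1
    have h2 := (smul_eq_zero.1 h1).resolve_left
      (inv_ne_zero (Nat.cast_ne_zero.2 (Nat.factorial_ne_zero j)))
    rw [OuterAux.Phi_toC, ← map_pow, h2, map_zero]
  have hz : outerExp (sigQc p q r) (p + q + r) (-Bμ)
      * reverse (outerExp (sigQc p q r) (p + q + r) (-Bμ)) = 0 := by
    have hμ' : (-μ) ^ k ≠ 0 := pow_ne_zero _ (neg_ne_zero.2 hμ)
    rw [OuterAux.Mpoly_eq _ hbc hkn h0 hμ, ← hBμ, map_smul, smul_mul_smul_comm] at heigen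
    exact (smul_eq_zero.1 heigen).resolve_left (mul_ne_zero hμ' hμ')
  refine OuterAux.core (sigQc p q r) hc ?_ hz hco ta hta
  rw [hBμ, map_smul]
  exact Submodule.smul_mem _ _ hbc
end

section
/- (Invariant Decomposition) Let B be a regular bivector in ℝ_{p,q,r} with effective dimension 2k, whose spectrum σ(B) = {±μ₁, …, ±μ_k} consists of 2k pairwise distinct (hence nonzero) eigenvalues, and suppose each outer tangent ta∧(B/μ_j) exists. Then B decomposes as B = Σ_{j=1}^k b_j with b_j := μ_j · ta∧(B/μ_j); the b_j are commuting simple bivectors. -/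
namespace InvDec

open CliffordAlgebra

section Ext
variable {K : Type*} [Field K] {M : Type*} [AddCommGroup M] [Module K M]

/-- left contraction on the exterior algebra -/
noncomputable def ct (d : Module.Dual K M) : ExteriorAlgebra K M →ₗ[K] ExteriorAlgebra K M :=
  contractLeft (Q := (0 : QuadraticForm K M)) d

theorem ct_ι_mul (d : Module.Dual K M) (a : M) (x : ExteriorAlgebra K M) :
    ct d (ExteriorAlgebra.ι K a * x) = d a • x - ExteriorAlgebra.ι K a * ct d x :=
  contractLeft_ι_mul (Q := (0 : QuadraticForm K M)) d a x

theorem ct_ι (d : Module.Dual K M) (a : M) :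
    ct d (ExteriorAlgebra.ι K a) = algebraMap K _ (d a) :=
  contractLeft_ι (Q := (0 : QuadraticForm K M)) d a

theorem ct_algebraMap (d : Module.Dual K M) (a : K) :
    ct d (algebraMap K _ a) = 0 :=
  contractLeft_algebraMap (Q := (0 : QuadraticForm K M)) d a

theorem ct_one (d : Module.Dual K M) : ct d (1 : ExteriorAlgebra K M) = 0 :=
  contractLeft_one (Q := (0 : QuadraticForm K M)) d

theorem ct_comm (d d' : Module.Dual K M) (x : ExteriorAlgebra K M) :
    ct d (ct d' x) = - ct d' (ct d x) :=
  contractLeft_comm (Q := (0 : QuadraticForm K M)) _ _ x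

theorem ι_swap (a b : M) : ExteriorAlgebra.ι K a * ExteriorAlgebra.ι K b
    = - (ExteriorAlgebra.ι K b * ExteriorAlgebra.ι K a) :=
  eq_neg_of_add_eq_zero_left (ExteriorAlgebra.ι_add_mul_swap a b)

theorem ext2_induction {p : ExteriorAlgebra K M → Prop} {γ : ExteriorAlgebra K M}
    (hγ : γ ∈ ⋀[K]^2 M)
    (hm : ∀ a b : M, p (ExteriorAlgebra.ι K a * ExteriorAlgebra.ι K b))
    (ha : ∀ x y, p x → p y → p (x + y)) : p γ := by
  have h : γ ∈ LinearMap.range (ExteriorAlgebra.ι K : M →ₗ[K] _) *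
      LinearMap.range (ExteriorAlgebra.ι K : M →ₗ[K] _) := by
    rw [← pow_two]; exact hγ
  refine Submodule.mul_induction_on h ?_ ha
  rintro _ ⟨a, rfl⟩ _ ⟨b, rfl⟩
  exact hm a b

theorem ext2_comm {γ : ExteriorAlgebra K M} (hγ : γ ∈ ⋀[K]^2 M) (x : ExteriorAlgebra K M) :
    γ * x = x * γ := by
  refine ext2_induction (p := fun γ => γ * x = x * γ) hγ ?_ ?_
  · intro a b
    induction x using ExteriorAlgebra.induction with
    | algebraMap r => exact (Algebra.commutes r _).symm
    | ι c =>
      rw [mul_assoc, ι_swap b c, mul_neg, ← mul_assoc, ι_swap a c, neg_mul, neg_neg, mul_assoc]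
    | mul x y hx hy => rw [← mul_assoc, hx, mul_assoc, hy, mul_assoc]
    | add x y hx hy => rw [mul_add, add_mul, hx, hy]
  · intro x y hx hy; rw [add_mul, mul_add, hx, hy]

theorem ct_ext2_mul (d : Module.Dual K M) {γ : ExteriorAlgebra K M} (hγ : γ ∈ ⋀[K]^2 M)
    (x : ExteriorAlgebra K M) : ct d (γ * x) = ct d γ * x + γ * ct d x := by
  refine ext2_induction (p := fun γ => ct d (γ * x) = ct d γ * x + γ * ct d x) hγ ?_ ?_
  · intro a b
    rw [mul_assoc, ct_ι_mul, ct_ι_mul, ct_ι_mul, ct_ι, mul_sub, sub_mul, mul_assoc, mul_assoc,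
      smul_mul_assoc, mul_smul_comm, ← Algebra.smul_def, mul_smul_comm]
    abel
  · intro x y hx hy; rw [add_mul, map_add, map_add, hx, hy]; noncomm_ring

theorem ct_ext2_pow (d : Module.Dual K M) {γ : ExteriorAlgebra K M} (hγ : γ ∈ ⋀[K]^2 M)
    (m : ℕ) : ct d (γ ^ (m + 1)) = ((m + 1 : ℕ) : K) • (ct d γ * γ ^ m) := by
  induction m with
  | zero => simp
  | succ m ih =>
    rw [pow_succ', ct_ext2_mul d hγ, ih, mul_smul_comm, ← mul_assoc γ, ext2_comm hγ (ct d γ),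
      mul_assoc, ← pow_succ']
    rw [Nat.cast_succ (m + 1), add_smul, one_smul, add_comm]

theorem ct_ext2_mem (d : Module.Dual K M) {γ : ExteriorAlgebra K M} (hγ : γ ∈ ⋀[K]^2 M) :
    ExteriorAlgebra.ι K (ExteriorAlgebra.ιInv (ct d γ)) = ct d γ := by
  refine ext2_induction
    (p := fun γ => ExteriorAlgebra.ι K (ExteriorAlgebra.ιInv (ct d γ)) = ct d γ) hγ ?_ ?_
  · intro a b
    have : ct d (ExteriorAlgebra.ι K a * ExteriorAlgebra.ι K b)
        = ExteriorAlgebra.ι K (d a • b - d b • a) := by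
      rw [ct_ι_mul, ct_ι, map_sub, map_smul, map_smul, ← Algebra.commutes, ← Algebra.smul_def]
    rw [this, ExteriorAlgebra.ι_leftInverse]
  · intro x y hx hy; rw [map_add, map_add, map_add, hx, hy]

theorem ct_ext0 (d : Module.Dual K M) {x : ExteriorAlgebra K M} (hx : x ∈ ⋀[K]^0 M) :
    ct d x = 0 := by
  rw [ExteriorAlgebra.exteriorPower, pow_zero, Submodule.mem_one] at hx
  obtain ⟨r, rfl⟩ := hx
  exact ct_algebraMap d r

theorem extS_induction {p : ExteriorAlgebra K M → Prop} {i : ℕ} {x : ExteriorAlgebra K M}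
    (hx : x ∈ ⋀[K]^(i + 1) M)
    (hm : ∀ (a : M) (y) , y ∈ ⋀[K]^i M → p (ExteriorAlgebra.ι K a * y))
    (ha : ∀ x y, p x → p y → p (x + y)) : p x := by
  have h : x ∈ LinearMap.range (ExteriorAlgebra.ι K : M →ₗ[K] _) *
      LinearMap.range (ExteriorAlgebra.ι K : M →ₗ[K] _) ^ i := by
    rw [← pow_succ']; exact hx
  refine Submodule.mul_induction_on h ?_ ha
  rintro _ ⟨a, rfl⟩ y hy
  exact hm a y hy

theorem ι_mul_mem (a : M) {i : ℕ} {x : ExteriorAlgebra K M} (hx : x ∈ ⋀[K]^i M) :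
    ExteriorAlgebra.ι K a * x ∈ ⋀[K]^(i + 1) M := by
  rw [ExteriorAlgebra.exteriorPower, pow_succ']
  exact Submodule.mul_mem_mul ⟨a, rfl⟩ hx

theorem ct_mem (d : Module.Dual K M) {i : ℕ} : ∀ {x : ExteriorAlgebra K M},
    x ∈ ⋀[K]^(i + 1) M → ct d x ∈ ⋀[K]^i M := by
  induction i with
  | zero =>
    intro x hx
    refine extS_induction (p := fun x => ct d x ∈ ⋀[K]^0 M) hx ?_ ?_
    · intro a y hy
      rw [ct_ι_mul, ct_ext0 d hy, mul_zero, sub_zero]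
      exact Submodule.smul_mem _ _ hy
    · intro x y hx hy; rw [map_add]; exact add_mem hx hy
  | succ i ih =>
    intro x hx
    refine extS_induction (p := fun x => ct d x ∈ ⋀[K]^(i + 1) M) hx ?_ ?_
    · intro a y hy
      rw [ct_ι_mul]
      exact sub_mem (Submodule.smul_mem _ _ hy) (ι_mul_mem a (ih hy))
    · intro x y hx hy; rw [map_add]; exact add_mem hx hy

theorem vanish (m : ℕ) : ∀ (i : ℕ) (_ : i < m) (v : Fin m → M) (_ : LinearIndependent K v)
    (x : ExteriorAlgebra K M) (_ : x ∈ ⋀[K]^i M) (_ : ∀ a, ExteriorAlgebra.ι K (v a) * x = 0),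
    x = 0 := by
  induction m with
  | zero => intro i hi; omega
  | succ m ih =>
    intro i hi v hv x hx h
    obtain ⟨d, hd0, hd⟩ : ∃ d : Module.Dual K M, d (v 0) ≠ 0 ∧ ∀ a : Fin m, d (v a.succ) = 0 := by
      have hn : v 0 ∉ Submodule.span K (Set.range (Fin.tail v)) :=
        (linearIndependent_finSucc.1 hv).2
      obtain ⟨f, hf, hle⟩ := Submodule.exists_le_ker_of_notMem hn
      exact ⟨f, hf, fun a => hle (Submodule.subset_span ⟨a, rfl⟩)⟩
    have hY : ct d x = 0 := by
      cases i with
      | zero => exact ct_ext0 d hx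
      | succ i =>
        refine ih i (by omega) (Fin.tail v) (linearIndependent_finSucc.1 hv).1 _ (ct_mem d hx) ?_
        intro a
        have := ct_ι_mul d (v a.succ) x
        rw [h, map_zero, hd, zero_smul, zero_sub, eq_comm, neg_eq_zero] at this
        exact this
    have := ct_ι_mul d (v 0) x
    rw [h, map_zero, hY, mul_zero, sub_zero, eq_comm, smul_eq_zero] at this
    exact this.resolve_left hd0

/-- the filtration by degree `< m` -/
def Fl (K : Type*) [Field K] (M : Type*) [AddCommGroup M] [Module K M] (m : ℕ) :
    Submodule K (ExteriorAlgebra K M) := ⨆ i : Fin m, ⋀[K]^(i : ℕ) M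

theorem mem_Fl {i m : ℕ} (h : i < m) {x : ExteriorAlgebra K M} (hx : x ∈ ⋀[K]^i M) :
    x ∈ Fl K M m := (le_iSup (fun i : Fin m => ⋀[K]^(i : ℕ) M) ⟨i, h⟩) hx

theorem Fl_le_of {m : ℕ} (S : Submodule K (ExteriorAlgebra K M))
    (h : ∀ i < m, ∀ x ∈ ⋀[K]^i M, x ∈ S) : Fl K M m ≤ S :=
  iSup_le fun i => h i i.2

theorem Fl_mono {m n : ℕ} (h : m ≤ n) : Fl K M m ≤ Fl K M n :=
  Fl_le_of _ fun _ hi _ hx => mem_Fl (lt_of_lt_of_le hi h) hx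

theorem Fl_ι_mul (a : M) {m : ℕ} {x : ExteriorAlgebra K M} (hx : x ∈ Fl K M m) :
    ExteriorAlgebra.ι K a * x ∈ Fl K M (m + 1) := by
  refine Fl_le_of (m := m) ((Fl K M (m + 1)).comap (LinearMap.mulLeft K (ExteriorAlgebra.ι K a)))
    ?_ hx
  intro i hi x hx
  exact mem_Fl (by omega) (ι_mul_mem a hx)

theorem Fl_ct (d : Module.Dual K M) {m : ℕ} {x : ExteriorAlgebra K M} (hx : x ∈ Fl K M m) :
    ct d x ∈ Fl K M m := by
  refine Fl_le_of (m := m) ((Fl K M m).comap (ct d)) ?_ hx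
  intro i hi x hx
  rw [Submodule.mem_comap]
  cases i with
  | zero => rw [ct_ext0 d hx]; exact zero_mem _
  | succ i => exact mem_Fl (by omega) (ct_mem d hx)

theorem Fl_ext2_mul {γ : ExteriorAlgebra K M} (hγ : γ ∈ ⋀[K]^2 M) {m : ℕ}
    {x : ExteriorAlgebra K M} (hx : x ∈ Fl K M m) : γ * x ∈ Fl K M (m + 2) := by
  refine ext2_induction (p := fun γ => γ * x ∈ Fl K M (m + 2)) hγ ?_ ?_
  · intro a b; rw [mul_assoc]; exact Fl_ι_mul a (Fl_ι_mul b hx)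
  · intro x y hx hy; rw [add_mul]; exact add_mem hx hy

theorem Fl_proj {m ℓ : ℕ} (h : m ≤ ℓ) {x : ExteriorAlgebra K M} (hx : x ∈ Fl K M m) :
    (DirectSum.decompose (fun n : ℕ => ⋀[K]^n M) x ℓ : ExteriorAlgebra K M) = 0 := by
  have := Fl_le_of (m := m)
    (LinearMap.ker (GradedAlgebra.proj (fun n : ℕ => ⋀[K]^n M) ℓ)) ?_ hx
  · exact this
  · intro i hi x hx
    rw [LinearMap.mem_ker, GradedAlgebra.proj_apply]
    exact DirectSum.decompose_of_mem_ne _ hx (by omega)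

theorem ext2_pow_mem {γ : ExteriorAlgebra K M} (hγ : γ ∈ ⋀[K]^2 M) (m : ℕ) :
    γ ^ m ∈ ⋀[K]^(2 * m) M := by
  rw [ExteriorAlgebra.exteriorPower, pow_mul]
  exact Submodule.pow_mem_pow _ hγ m

end Ext

section Cl
variable {K : Type*} [Field K] [CharZero K] {M : Type*} [AddCommGroup M] [Module K M]

/-- the canonical linear isomorphism to the exterior algebra -/
noncomputable def phi (Q : QuadraticForm K M) : CliffordAlgebra Q ≃ₗ[K] ExteriorAlgebra K M :=
  letI : Invertible (2 : K) := invertibleOfNonzero two_ne_zero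
  equivExterior Q

/-- the symmetric bilinear form of `Q` -/
noncomputable def gB (Q : QuadraticForm K M) : M →ₗ[K] Module.Dual K M :=
  letI : Invertible (2 : K) := invertibleOfNonzero two_ne_zero
  QuadraticMap.associated (R := K) Q

theorem gB_symm (Q : QuadraticForm K M) (x y : M) : gB Q x y = gB Q y x := by
  let _ : Invertible (2 : K) := invertibleOfNonzero two_ne_zero
  exact QuadraticMap.associated_isSymm K Q x y

theorem gB_self (Q : QuadraticForm K M) (x : M) : gB Q x x = Q x := by
  let _ : Invertible (2 : K) := invertibleOfNonzero two_ne_zero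
  exact QuadraticMap.associated_eq_self_apply K Q x

theorem two_gB (Q : QuadraticForm K M) (x y : M) : 2 * gB Q x y = QuadraticMap.polar Q x y := by
  let _ : Invertible (2 : K) := invertibleOfNonzero two_ne_zero
  have := QuadraticMap.two_nsmul_associated K Q
  have h := congrArg (fun f => f x y) this
  rw [two_mul]
  simp [two_nsmul] at h
  exact h

theorem phi_ι_mul (Q : QuadraticForm K M) (v : M) (x : CliffordAlgebra Q) :
    phi Q (ι Q v * x) = ExteriorAlgebra.ι K v * phi Q x + ct (gB Q v) (phi Q x) := by
  let _ : Invertible (2 : K) := invertibleOfNonzero two_ne_zero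
  have := changeForm_ι_mul (changeForm.associated_neg_proof (Q := Q)) v x
  have hneg : QuadraticMap.associated (R := K) (-Q) v = - gB Q v := by
    rw [map_neg, LinearMap.neg_apply]; rfl
  refine this.trans ?_
  rw [hneg]
  have h2 : ∀ y : ExteriorAlgebra K M,
      contractLeft (Q := (0 : QuadraticForm K M)) (-(gB Q v)) y = - ct (gB Q v) y := by
    intro y
    rw [map_neg]
    rfl
  change ExteriorAlgebra.ι K v * phi Q x
    - contractLeft (Q := (0 : QuadraticForm K M)) (-(gB Q v)) (phi Q x) = _
  rw [h2, sub_neg_eq_add]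

theorem phi_ι (Q : QuadraticForm K M) (v : M) :
    phi Q (ι Q v) = ExteriorAlgebra.ι K v := by
  let _ : Invertible (2 : K) := invertibleOfNonzero two_ne_zero
  exact changeForm_ι (changeForm.associated_neg_proof (Q := Q)) v

theorem phi_algebraMap (Q : QuadraticForm K M) (r : K) :
    phi Q (algebraMap K _ r) = algebraMap K _ r := by
  let _ : Invertible (2 : K) := invertibleOfNonzero two_ne_zero
  exact changeForm_algebraMap (changeForm.associated_neg_proof (Q := Q)) r

theorem phi_one (Q : QuadraticForm K M) : phi Q 1 = 1 := by
  simpa using phi_algebraMap Q 1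

theorem phi_ι_mul_ι (Q : QuadraticForm K M) (v w : M) :
    phi Q (ι Q v * ι Q w) = ExteriorAlgebra.ι K v * ExteriorAlgebra.ι K w
      + algebraMap K _ (gB Q v w) := by
  rw [phi_ι_mul, phi_ι, ct_ι]

theorem phi_gradeProj (Q : QuadraticForm K M) (l : ℕ) (x : CliffordAlgebra Q) :
    phi Q (gradeProj Q l x) =
      (DirectSum.decompose (fun n : ℕ => ⋀[K]^n M) (phi Q x) l : ExteriorAlgebra K M) :=
  LinearEquiv.apply_symm_apply _ _

theorem isGrade_iff (Q : QuadraticForm K M) (l : ℕ) (x : CliffordAlgebra Q) :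
    IsGrade Q l x ↔ phi Q x ∈ ⋀[K]^l M := by
  rw [IsGrade, ← (phi Q).injective.eq_iff, phi_gradeProj]
  constructor
  · intro h; rw [← h]; exact SetLike.coe_mem _
  · intro h; exact DirectSum.decompose_of_mem_same _ h

theorem phi_bivec_mul (Q : QuadraticForm K M) {γ : ExteriorAlgebra K M} (hγ : γ ∈ ⋀[K]^2 M)
    (x : CliffordAlgebra Q) (m : ℕ) (hx : phi Q x ∈ Fl K M (m + 1)) :
    phi Q ((phi Q).symm γ * x) - γ * phi Q x ∈ Fl K M (m + 2) := by
  refine ext2_induction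
    (p := fun γ => phi Q ((phi Q).symm γ * x) - γ * phi Q x ∈ Fl K M (m + 2)) hγ ?_ ?_
  · intro a b
    have h : (phi Q).symm (ExteriorAlgebra.ι K a * ExteriorAlgebra.ι K b)
        = ι Q a * ι Q b - algebraMap K _ (gB Q a b) := by
      rw [LinearEquiv.symm_apply_eq, map_sub, phi_ι_mul_ι, phi_algebraMap, add_sub_cancel_right]
    rw [h, sub_mul, map_sub, mul_assoc, phi_ι_mul, phi_ι_mul, ← Algebra.smul_def, map_smul,
      map_add, mul_add, ← mul_assoc]
    have e : ∀ A B C D E : ExteriorAlgebra K M, A + B + (C + D) - E - A = B + C + D - E := by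
      intros; abel
    rw [e]
    have h1 := Fl_ct (gB Q b) hx
    refine sub_mem (add_mem (add_mem (Fl_ι_mul a h1) (Fl_ct _ (Fl_ι_mul b hx))) ?_) ?_
    · exact Fl_mono (by omega) (Fl_ct _ h1)
    · exact Fl_mono (by omega) (Submodule.smul_mem _ _ hx)
  · intro y z hy hz
    rw [map_add, add_mul, add_mul, map_add, add_sub_add_comm]
    exact add_mem hy hz

theorem phi_pow (Q : QuadraticForm K M) (B : CliffordAlgebra Q) (hB : phi Q B ∈ ⋀[K]^2 M)
    (j : ℕ) : phi Q (B ^ j) - phi Q B ^ j ∈ Fl K M (2 * j) := by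
  induction j with
  | zero => simp [phi_one]
  | succ j ih =>
    have h1 : phi Q (B ^ j) ∈ Fl K M (2 * j + 1) := by
      have := add_mem (Fl_mono (by omega) ih)
        (mem_Fl (show 2 * j < 2 * j + 1 by omega) (ext2_pow_mem hB j))
      rwa [sub_add_cancel] at this
    have h2 := phi_bivec_mul Q hB (B ^ j) (2 * j) h1
    have h3 := Fl_ext2_mul hB ih
    have := add_mem h2 h3
    rw [LinearEquiv.symm_apply_apply, mul_sub, sub_add_sub_cancel, ← pow_succ', ← pow_succ'] at this
    exact this

theorem phi_Wj (Q : QuadraticForm K M) (B : CliffordAlgebra Q) (hB : phi Q B ∈ ⋀[K]^2 M)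
    (j : ℕ) : phi Q (Wj Q B j) = ((j.factorial : K)⁻¹) • phi Q B ^ j := by
  rw [Wj, map_smul, phi_gradeProj]
  congr 1
  have h := Fl_proj le_rfl (phi_pow Q B hB j)
  rw [DirectSum.decompose_sub, DirectSum.sub_apply, Submodule.coe_sub, sub_eq_zero] at h
  rw [h]
  exact DirectSum.decompose_of_mem_same _ (ext2_pow_mem hB j)

/-- truncated wedge exponential -/
noncomputable def ex (k : ℕ) (β : ExteriorAlgebra K M) (t : K) : ExteriorAlgebra K M :=
  ∑ j ∈ Finset.range (k + 1), (t ^ j * (j.factorial : K)⁻¹) • β ^ j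

theorem ct_ex (d : Module.Dual K M) {k : ℕ} {β : ExteriorAlgebra K M} (hβ : β ∈ ⋀[K]^2 M)
    (hn : β ^ (k + 1) = 0) (t : K) : ct d (ex k β t) = t • (ct d β * ex k β t) := by
  have hk : ct d β * β ^ k = 0 := by
    have := ct_ext2_pow d hβ k
    rw [hn, map_zero, eq_comm, smul_eq_zero] at this
    exact this.resolve_left (Nat.cast_ne_zero.2 (by omega))
  rw [ex, map_sum, Finset.sum_range_succ', Finset.mul_sum, Finset.sum_range_succ]
  rw [mul_smul_comm, hk, smul_zero, add_zero, map_smul, pow_zero β, ct_one, smul_zero, add_zero,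
    Finset.smul_sum]
  refine Finset.sum_congr rfl fun j _ => ?_
  rw [map_smul, ct_ext2_pow d hβ, mul_smul_comm, smul_smul, smul_smul]
  congr 1
  have h1 : ((j + 1 : ℕ) : K) ≠ 0 := Nat.cast_ne_zero.2 (by omega)
  have h2 : ((j.factorial : ℕ) : K) ≠ 0 := Nat.cast_ne_zero.2 (Nat.factorial_ne_zero _)
  rw [Nat.factorial_succ, Nat.cast_mul]
  field_simp
  ring

theorem isUnit_ex {k : ℕ} {β : ExteriorAlgebra K M}
    (hn : β ^ (k + 1) = 0) (t : K) : IsUnit (ex k β t) := by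
  rw [ex, Finset.sum_range_succ']
  simp only [pow_zero, Nat.factorial_zero, Nat.cast_one, inv_one, mul_one, one_smul]
  refine IsNilpotent.isUnit_add_one ?_
  refine Commute.isNilpotent_sum ?_ ?_
  · intro j _
    refine ⟨k + 1, ?_⟩
    rw [smul_pow, pow_right_comm, hn, zero_pow (by omega), smul_zero]
  · intro i j _ _
    exact (((Commute.refl β).pow_pow _ _).smul_left _).smul_right _

theorem ct_mul_of_exp (d : Module.Dual K M) (w : M) (Lam : ExteriorAlgebra K M)
    (h : ct d Lam = ExteriorAlgebra.ι K w * Lam) (X : ExteriorAlgebra K M) :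
    ct d (X * Lam) = (ct d X + ExteriorAlgebra.ι K w * X) * Lam := by
  induction X using CliffordAlgebra.left_induction with
  | algebraMap r =>
    have : ct d (algebraMap K (ExteriorAlgebra K M) r) = 0 := ct_algebraMap d r
    rw [this, ← Algebra.smul_def, map_smul, h, zero_add, ← Algebra.commutes, mul_assoc,
      ← Algebra.smul_def]
  | add x y hx hy => rw [add_mul, map_add, hx, hy, map_add]; noncomm_ring
  | ι_mul x a hx =>
    change ct d (ExteriorAlgebra.ι K a * x * Lam) = (ct d (ExteriorAlgebra.ι K a * x) +
      ExteriorAlgebra.ι K w * (ExteriorAlgebra.ι K a * x)) * Lam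
    rw [mul_assoc, ct_ι_mul, hx, ct_ι_mul, ← mul_assoc (ExteriorAlgebra.ι K w), ι_swap w a]
    simp only [add_mul, sub_mul, mul_add, smul_mul_assoc, neg_mul, mul_assoc]
    abel

/-- the linear map `v ↦ v ⌋ β` -/
noncomputable def LL (Q : QuadraticForm K M) (β : ExteriorAlgebra K M) : M →ₗ[K] M :=
  ExteriorAlgebra.ιInv ∘ₗ
    ((contractLeft (Q := (0 : QuadraticForm K M))).flip β) ∘ₗ gB Q

theorem ι_LL (Q : QuadraticForm K M) {β : ExteriorAlgebra K M} (hβ : β ∈ ⋀[K]^2 M) (v : M) :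
    ct (gB Q v) β = ExteriorAlgebra.ι K (LL Q β v) := (ct_ext2_mem (gB Q v) hβ).symm

theorem LL_skew (Q : QuadraticForm K M) {β : ExteriorAlgebra K M} (hβ : β ∈ ⋀[K]^2 M) (x y : M) :
    gB Q y (LL Q β x) = - gB Q x (LL Q β y) := by
  have := ct_comm (gB Q y) (gB Q x) β
  rw [ι_LL Q hβ, ι_LL Q hβ, ct_ι, ct_ι, ← map_neg] at this
  exact (ExteriorAlgebra.algebraMap_leftInverse M).injective this

theorem LL_ortho (Q : QuadraticForm K M) {β : ExteriorAlgebra K M} (hβ : β ∈ ⋀[K]^2 M) {x y : M}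
    {a b : K} (hx : LL Q β x = a • x) (hy : LL Q β y = b • y) (hab : a + b ≠ 0) :
    gB Q x y = 0 := by
  have := LL_skew Q hβ x y
  rw [hx, hy, map_smul, map_smul, gB_symm Q y x, smul_eq_mul, smul_eq_mul] at this
  have h : (a + b) * gB Q x y = 0 := by linear_combination this
  exact (mul_eq_zero.1 h).resolve_left hab

theorem exists_eigen [FiniteDimensional K M] (Q : QuadraticForm K M) (L : M →ₗ[K] M) (t : K)
    (N : CliffordAlgebra Q) (hu : IsUnit (phi Q N))
    (hL : ∀ v, ct (gB Q v) (phi Q N) = t • (ExteriorAlgebra.ι K (L v) * phi Q N))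
    (h0 : N * reverse N = 0) : ∃ v, v ≠ 0 ∧ v + t • L v = 0 := by
  by_contra hcon
  push Not at hcon
  have hinj : Function.Injective (LinearMap.id + t • L : M →ₗ[K] M) := by
    rw [← LinearMap.ker_eq_bot, LinearMap.ker_eq_bot']
    intro v hv
    by_contra hne
    exact hcon v hne hv
  have hsurj := LinearMap.injective_iff_surjective.1 hinj
  let S : Submodule K (ExteriorAlgebra K M) :=
    (LinearMap.range ((phi Q).toLinearMap ∘ₗ LinearMap.mulRight K N)).comap
      (LinearMap.mulRight K (phi Q N))
  have hS : ∀ X, X ∈ S ↔ ∃ Y, phi Q (Y * N) = X * phi Q N := fun X => Iff.rfl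
  have step : ∀ (a : M) (X : ExteriorAlgebra K M), X ∈ S → (∀ d, ct d X ∈ S) →
      ExteriorAlgebra.ι K a * X ∈ S := by
    intro a X hX hd
    obtain ⟨v, rfl⟩ := hsurj a
    obtain ⟨Y, hY⟩ := (hS X).1 hX
    have e : phi Q ((ι Q v * Y) * N) =
        (ExteriorAlgebra.ι K (v + t • L v) * X + ct (gB Q v) X) * phi Q N := by
      rw [mul_assoc, phi_ι_mul, hY, ct_mul_of_exp (gB Q v) (t • L v), map_add]
      · noncomm_ring
      · rw [hL, map_smul, smul_mul_assoc]
    have h1 : ExteriorAlgebra.ι K (v + t • L v) * X + ct (gB Q v) X ∈ S := (hS _).2 ⟨_, e⟩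
    have h2 := sub_mem h1 (hd (gB Q v))
    rwa [add_sub_cancel_right] at h2
  have hall : ∀ m, ∀ i < m, ∀ X ∈ ⋀[K]^i M, X ∈ S := by
    intro m
    induction m with
    | zero => intro i hi; omega
    | succ m ih =>
      intro i hi X hX
      cases i with
      | zero =>
        rw [ExteriorAlgebra.exteriorPower, pow_zero, Submodule.mem_one] at hX
        obtain ⟨r, rfl⟩ := hX
        exact (hS _).2 ⟨algebraMap K _ r, by
          rw [← Algebra.smul_def, ← Algebra.smul_def, map_smul]⟩
      | succ i =>
        refine extS_induction (p := fun X => X ∈ S) hX ?_ ?_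
        · intro a y hy
          refine step a y (ih i (by omega) y hy) fun d => ?_
          cases i with
          | zero => rw [ct_ext0 d hy]; exact zero_mem _
          | succ i => exact ih i (by omega) _ (ct_mem d hy)
        · intro x y hx hy; exact add_mem hx hy
  have htop : ∀ X, X ∈ S := by
    intro X
    refine DirectSum.Decomposition.inductionOn (fun n : ℕ => ⋀[K]^n M)
      (motive := fun X => X ∈ S) (zero_mem _) ?_ (fun _ _ => add_mem) X
    intro i m
    exact hall (i + 1) i (by omega) _ m.2
  obtain ⟨X, hX⟩ := hu.exists_left_inv
  obtain ⟨Y, hY⟩ := (hS X).1 (htop X)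
  rw [hX, ← phi_one Q] at hY
  have hY1 := (phi Q).injective hY
  have hr : reverse N = 0 := by
    rw [← one_mul (reverse N), ← hY1, mul_assoc, h0, mul_zero]
  have hN : N = 0 := by rw [← reverse_reverse N, hr, map_zero]
  rw [hN, map_zero] at hu
  exact not_isUnit_zero hu

end Cl

section Main
variable {K : Type*} [Field K] [CharZero K] {M : Type*} [AddCommGroup M] [Module K M]

theorem phi_Mpoly (Q : QuadraticForm K M) (B : CliffordAlgebra Q) (hB : phi Q B ∈ ⋀[K]^2 M)
    (k : ℕ) (μ : K) (hμ : μ ≠ 0) :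
    phi Q (Mpoly Q B k μ) = (-μ) ^ k • ex k (phi Q B) (-μ⁻¹) := by
  rw [Mpoly, ex, map_sum, Finset.smul_sum]
  refine Finset.sum_congr rfl fun j hj => ?_
  rw [map_smul, phi_Wj Q B hB, smul_smul, smul_smul]
  congr 1
  have hj' : j ≤ k := by have := Finset.mem_range.1 hj; omega
  rw [← mul_assoc]
  congr 1
  obtain ⟨i, rfl⟩ := Nat.exists_eq_add_of_le hj'
  rw [Nat.add_sub_cancel_left, pow_add, mul_comm ((-μ) ^ j), mul_assoc, ← mul_pow, neg_mul_neg,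
    mul_inv_cancel₀ hμ, one_pow, mul_one]

theorem phi_Mpoly_zero (Q : QuadraticForm K M) (B : CliffordAlgebra Q)
    (hB : phi Q B ∈ ⋀[K]^2 M) (k : ℕ) :
    phi Q (Mpoly Q B k 0) = ((k.factorial : K)⁻¹) • phi Q B ^ k := by
  rw [Mpoly, Finset.sum_range_succ, Finset.sum_eq_zero, zero_add, Nat.sub_self, pow_zero,
    one_smul, phi_Wj Q B hB]
  intro j hj
  have := Finset.mem_range.1 hj
  rw [neg_zero, zero_pow (by omega), zero_smul]

theorem phi_outerExp (Q : QuadraticForm K M) (B : CliffordAlgebra Q)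
    (hB : phi Q B ∈ ⋀[K]^2 M) (k n : ℕ) (hk : phi Q B ^ (k + 1) = 0) (hkn : k ≤ n) (t : K) :
    phi Q (outerExp Q n (t • B)) = ex k (phi Q B) t := by
  have hB' : phi Q (t • B) ∈ ⋀[K]^2 M := by rw [map_smul]; exact Submodule.smul_mem _ _ hB
  have h : ∀ j, phi Q (Wj Q (t • B) j) = (t ^ j * (j.factorial : K)⁻¹) • phi Q B ^ j := by
    intro j
    rw [phi_Wj Q _ hB', map_smul, smul_pow, smul_smul, mul_comm]
  rw [outerExp, map_sum, ex]
  simp only [h]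
  symm
  refine Finset.sum_subset (Finset.range_mono (by omega)) ?_
  intro j _ hj
  have : k + 1 ≤ j := by simpa using hj
  rw [pow_eq_zero_of_le this hk, smul_zero]

theorem peel {γ δ : ExteriorAlgebra K M} (hδ : δ ∈ ⋀[K]^2 M)
    (u w : M) (d d' : Module.Dual K M) (c : K) (hc : c ≠ 0)
    (hdu : d u = 0) (hdw : d w ≠ 0) (hd'u : d' u ≠ 0) (hd'w : d' w = 0)
    (hγ : γ = c • (ExteriorAlgebra.ι K u * ExteriorAlgebra.ι K w) + δ)
    (h1 : ct d δ = 0) (h2 : ct d' δ = 0) (m : ℕ) (hm : γ ^ (m + 1) = 0) : δ ^ m = 0 := by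
  have hz : ∀ e : Module.Dual K M, ct e δ = 0 → ∀ i, ct e (δ ^ i) = 0 := by
    intro e he i
    cases i with
    | zero => rw [pow_zero, ct_one]
    | succ i => rw [ct_ext2_pow e hδ, he, zero_mul, smul_zero]
  set x : ExteriorAlgebra K M := ExteriorAlgebra.ι K u * ExteriorAlgebra.ι K w with hx
  have hxx : x * x = 0 := by
    rw [hx, mul_assoc, ← mul_assoc (ExteriorAlgebra.ι K w), ι_swap w u, neg_mul, mul_neg,
      mul_assoc, ExteriorAlgebra.ι_sq_zero, mul_zero, mul_zero, neg_zero]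
  have hpow : ∀ i : ℕ, γ ^ (i + 1) = δ ^ (i + 1) + (((i + 1 : ℕ) : K) * c) • (x * δ ^ i) := by
    intro i
    induction i with
    | zero => rw [hγ]; simp [add_comm]
    | succ i ih =>
      rw [pow_succ', ih, hγ, add_mul, mul_add, mul_add, smul_mul_assoc, smul_mul_assoc,
        mul_smul_comm, ← mul_assoc x x, hxx, zero_mul, smul_zero, smul_zero, add_zero,
        mul_smul_comm, ← mul_assoc δ, ext2_comm hδ x, mul_assoc x δ, ← pow_succ', ← pow_succ',
        Nat.cast_succ (i + 1), add_mul, add_smul, one_mul]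
      abel
  have h := hpow m
  rw [hm] at h
  have ha := congrArg (fun z => ct d' (ct d z)) h
  simp only [map_zero, map_add, map_smul, hz d h1] at ha
  rw [hx, mul_assoc, ct_ι_mul, ct_ι_mul, hz d h1, mul_zero, sub_zero, hdu, zero_smul, zero_sub,
    map_neg, mul_smul_comm, map_smul, ct_ι_mul, hz d' h2, mul_zero, sub_zero, zero_add,
    smul_neg, eq_comm, neg_eq_zero, smul_smul, smul_smul, smul_eq_zero] at ha
  refine ha.resolve_left ?_
  have : ((m + 1 : ℕ) : K) ≠ 0 := Nat.cast_ne_zero.2 (by omega)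
  exact mul_ne_zero (mul_ne_zero (mul_ne_zero this hc) hdw) hd'u

theorem main_abs [FiniteDimensional K M] (Q : QuadraticForm K M) (B : CliffordAlgebra Q)
    (hB : phi Q B ∈ ⋀[K]^2 M) (k n : ℕ) (hk : phi Q B ^ (k + 1) = 0)
    (hn : Module.finrank K M ≤ n) (μs : Fin k → K)
    (hroots : ∀ μ : K, Mpoly Q B k μ * reverse (Mpoly Q B k μ)
        = algebraMap K (CliffordAlgebra Q) (∏ i : Fin k, (μ ^ 2 - μs i ^ 2)))
    (hdist₁ : ∀ i j : Fin k, μs i = μs j → i = j)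
    (hdist₂ : ∀ i j : Fin k, μs i ≠ -μs j)
    (hco : ∀ j : Fin k, IsUnit (coW Q n ((μs j)⁻¹ • B)))
    (b : Fin k → CliffordAlgebra Q)
    (hb : ∀ j : Fin k, b j = μs j •
      (siW Q n ((μs j)⁻¹ • B) * Ring.inverse (coW Q n ((μs j)⁻¹ • B)))) :
    B = ∑ j : Fin k, b j ∧
    (∀ i j : Fin k, cprod (b i) (b j) = 0) ∧
    (∀ j : Fin k, IsGrade Q 2 (b j) ∧
      ∃ c : K, b j * b j = algebraMap K (CliffordAlgebra Q) c) := by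
  set β := phi Q B with hβ
  set L := LL Q β with hL
  have hμ0 : ∀ j, μs j ≠ 0 := by
    intro j h
    exact hdist₂ j j (by rw [h, neg_zero])
  have h2μ : ∀ j, μs j + μs j ≠ 0 := fun j h => hdist₂ j j (eq_neg_of_add_eq_zero_left h)
  -- eigenvectors
  have heig : ∀ l : K, l ≠ 0 → (∃ i, l ^ 2 = μs i ^ 2) → ∃ v, v ≠ 0 ∧ L v = l • v := by
    rintro l hl ⟨i, hi⟩
    have h0 : Mpoly Q B k l * reverse (Mpoly Q B k l) = 0 := by
      rw [hroots, Finset.prod_eq_zero (Finset.mem_univ i) (by rw [hi, sub_self]), map_zero]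
    have hp := phi_Mpoly Q B hB k l hl
    have hc : (-l) ^ k ≠ 0 := pow_ne_zero _ (neg_ne_zero.2 hl)
    obtain ⟨v, hv, hv'⟩ := exists_eigen Q L (-l⁻¹) (Mpoly Q B k l)
      (by
        rw [hp, Algebra.smul_def]
        exact ((IsUnit.mk0 _ hc).map _).mul (isUnit_ex hk _))
      (by
        intro v
        rw [hp, map_smul, ct_ex _ hB hk, ι_LL Q hB, mul_smul_comm, smul_comm]) h0
    refine ⟨v, hv, ?_⟩
    have : l • (v + -l⁻¹ • L v) = 0 := by rw [hv', smul_zero]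
    rw [smul_add, smul_smul, mul_neg, mul_inv_cancel₀ hl, neg_one_smul, ← sub_eq_add_neg,
      sub_eq_zero] at this
    exact this.symm
  choose u hu0 hu using fun i => heig (μs i) (hμ0 i) ⟨i, rfl⟩
  choose w hw0 hw using fun i => heig (-μs i) (neg_ne_zero.2 (hμ0 i)) ⟨i, neg_sq _⟩
  have guu : ∀ i j, gB Q (u i) (u j) = 0 := fun i j =>
    LL_ortho Q hB (hu i) (hu j) (fun h => hdist₂ i j (eq_neg_of_add_eq_zero_left h))
  have gww : ∀ i j, gB Q (w i) (w j) = 0 := fun i j =>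
    LL_ortho Q hB (hw i) (hw j) (fun h => hdist₂ i j (by
      rw [← neg_add, neg_eq_zero] at h; exact eq_neg_of_add_eq_zero_left h))
  have guw : ∀ i j, i ≠ j → gB Q (u i) (w j) = 0 := fun i j hij =>
    LL_ortho Q hB (hu i) (hw j) (fun h => hij (hdist₁ i j (by
      rw [← sub_eq_add_neg, sub_eq_zero] at h; exact h)))
  -- independence
  have hli : LinearIndependent K (Sum.elim u w) := by
    refine Module.End.eigenvectors_linearIndependent' L (Sum.elim μs (fun i => -μs i)) ?_ _ ?_
    · rintro (i | i) (j | j) h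
      · rw [hdist₁ i j h]
      · exact absurd h (hdist₂ i j)
      · exact absurd h.symm (hdist₂ j i)
      · rw [hdist₁ i j (neg_injective h)]
    · rintro (i | i)
      · exact Module.End.hasEigenvector_iff.2 ⟨Module.End.mem_eigenspace_iff.2 (hu i), hu0 i⟩
      · exact Module.End.hasEigenvector_iff.2 ⟨Module.End.mem_eigenspace_iff.2 (hw i), hw0 i⟩
  have hkn : k ≤ n := by
    have := hli.fintype_card_le_finrank
    simp at this
    omega
  -- nondegeneracy
  have hk1 : ∀ (v : M) (l : K), l ≠ 0 → L v = l • v → ExteriorAlgebra.ι K v * β ^ k = 0 := by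
    intro v l hl hv
    have := ct_ext2_pow (gB Q v) hB k
    rw [hk, map_zero, ι_LL Q hB, ← hL, hv, map_smul, smul_mul_assoc, smul_smul, eq_comm,
      smul_eq_zero] at this
    exact this.resolve_left (mul_ne_zero (Nat.cast_ne_zero.2 (by omega)) hl)
  have gne : ∀ j, gB Q (u j) (w j) ≠ 0 := by
    intro j hj
    have hall : ∀ s : Fin k ⊕ Fin k, gB Q (u j) (Sum.elim u w s) = 0 := by
      rintro (i | i)
      · exact guu j i
      · by_cases h : j = i
        · subst h; exact hj
        · exact guw j i h
    have hkill : ∀ s : Fin k ⊕ Fin k, ExteriorAlgebra.ι K (Sum.elim u w s) * β ^ k = 0 := by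
      rintro (i | i)
      · exact hk1 _ _ (hμ0 i) (hu i)
      · exact hk1 _ _ (neg_ne_zero.2 (hμ0 i)) (hw i)
    have hkpos : 0 < k := j.pos
    have hX : ct (gB Q (u j)) (β ^ k) = 0 := by
      refine vanish (k + k) (2 * k - 1) (by omega) (Sum.elim u w ∘ finSumFinEquiv.symm)
        (hli.comp _ finSumFinEquiv.symm.injective) _ (ct_mem _ ?_) ?_
      · have := ext2_pow_mem hB k
        rwa [show 2 * k - 1 + 1 = 2 * k by omega]
      · intro a
        have := ct_ι_mul (gB Q (u j)) (Sum.elim u w (finSumFinEquiv.symm a)) (β ^ k)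
        rw [hkill, hall, map_zero, zero_smul, zero_sub, eq_comm, neg_eq_zero] at this
        exact this
    have hz : ι Q (u j) * Mpoly Q B k 0 = 0 := by
      apply (phi Q).injective
      rw [phi_ι_mul, phi_Mpoly_zero Q B hB, map_smul, hX, smul_zero, add_zero, mul_smul_comm,
        hk1 _ _ (hμ0 j) (hu j), smul_zero, map_zero]
    have hz2 : ι Q (u j) * (Mpoly Q B k 0 * reverse (Mpoly Q B k 0)) = 0 := by
      rw [← mul_assoc, hz, zero_mul]
    rw [hroots, ← Algebra.commutes, ← Algebra.smul_def, smul_eq_zero] at hz2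
    rcases hz2 with h | h
    · rw [Finset.prod_eq_zero_iff] at h
      obtain ⟨i, -, hi⟩ := h
      rw [zero_pow two_ne_zero, zero_sub, neg_eq_zero] at hi
      exact hμ0 i (pow_eq_zero_iff two_ne_zero |>.1 hi)
    · have := congrArg (phi Q) h
      rw [phi_ι, map_zero, ExteriorAlgebra.ι_eq_zero_iff] at this
      exact hu0 j this
  -- the planes
  set g : Fin k → K := fun j => gB Q (u j) (w j) with hg
  set c : Fin k → K := fun j => -(μs j / g j) with hc
  have hcne : ∀ j, c j ≠ 0 := fun j => neg_ne_zero.2 (div_ne_zero (hμ0 j) (gne j))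
  have hcg : ∀ j, c j * g j = - μs j := by
    intro j; simp only [hc]; rw [neg_mul, div_mul_cancel₀ _ (gne j)]
  set β' : Fin k → ExteriorAlgebra K M :=
    fun j => c j • (ExteriorAlgebra.ι K (u j) * ExteriorAlgebra.ι K (w j)) with hβ'
  have hβ'mem : ∀ j, β' j ∈ ⋀[K]^2 M := by
    intro j
    refine Submodule.smul_mem _ _ ?_
    rw [ExteriorAlgebra.exteriorPower, pow_two]
    exact Submodule.mul_mem_mul ⟨_, rfl⟩ ⟨_, rfl⟩
  have hctβ' : ∀ d j, ct d (β' j) = c j • (d (u j) • ExteriorAlgebra.ι K (w j)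
      - d (w j) • ExteriorAlgebra.ι K (u j)) := by
    intro d j
    simp only [hβ']
    rw [map_smul, ct_ι_mul, ct_ι, ← Algebra.commutes, ← Algebra.smul_def]
  have hdu : ∀ i j, i ≠ j → ct (gB Q (u i)) (β' j) = 0 := by
    intro i j hij
    rw [hctβ', guu, guw i j hij, zero_smul, zero_smul, sub_zero, smul_zero]
  have hdw : ∀ i j, i ≠ j → ct (gB Q (w i)) (β' j) = 0 := by
    intro i j hij
    rw [hctβ', gww, gB_symm, guw j i hij.symm, zero_smul, zero_smul, sub_zero, smul_zero]
  have hduu : ∀ i, ct (gB Q (u i)) β = ct (gB Q (u i)) (β' i) := by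
    intro i
    rw [hctβ', guu, zero_smul, zero_sub, ι_LL Q hB, ← hL, hu, smul_neg, smul_smul, map_smul,
      ← neg_smul]
    congr 1
    have := hcg i
    simp only [hg] at this
    rw [this, neg_neg]
  have hdww : ∀ i, ct (gB Q (w i)) β = ct (gB Q (w i)) (β' i) := by
    intro i
    rw [hctβ', gww, zero_smul, sub_zero, ι_LL Q hB, ← hL, hw, smul_smul, map_smul, gB_symm]
    congr 1
    exact (hcg i).symm
  have hpeel : ∀ S : Finset (Fin k), (β - ∑ j ∈ S, β' j) ^ (k + 1 - S.card) = 0 := by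
    intro S
    induction S using Finset.induction_on with
    | empty => simpa using hk
    | insert a S ha ih =>
      have hcard : S.card + 1 ≤ k := by
        have := Finset.card_le_univ (insert a S)
        rwa [Finset.card_insert_of_notMem ha, Fintype.card_fin] at this
      rw [Finset.card_insert_of_notMem ha, Finset.sum_insert ha]
      have hS : ∀ j ∈ S, a ≠ j := fun j hj h => ha (h ▸ hj)
      refine peel (γ := β - ∑ j ∈ S, β' j) ?_ (u a) (w a) (gB Q (u a)) (gB Q (w a)) (c a)
        (hcne a) (guu a a) (gne a) (by rw [gB_symm]; exact gne a) (gww a a) ?_ ?_ ?_ _ ?_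
      · exact sub_mem hB (add_mem (hβ'mem a) (sum_mem fun j _ => hβ'mem j))
      · change _ = β' a + _
        abel
      · rw [map_sub, map_add, map_sum, hduu, Finset.sum_eq_zero fun j hj => hdu a j (hS j hj),
          add_zero, sub_self]
      · rw [map_sub, map_add, map_sum, hdww, Finset.sum_eq_zero fun j hj => hdw a j (hS j hj),
          add_zero, sub_self]
      · rw [show k + 1 - (S.card + 1) + 1 = k + 1 - S.card by omega]
        exact ih
  have hdecomp : β = ∑ j, β' j := by
    have := hpeel Finset.univ
    rw [Finset.card_univ, Fintype.card_fin, Nat.add_sub_cancel_left, pow_one, sub_eq_zero] at this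
    exact this
  -- Clifford side
  set x : Fin k → CliffordAlgebra Q :=
    fun j => c j • (ι Q (u j) * ι Q (w j) - algebraMap K _ (g j)) with hx
  have hphix : ∀ j, phi Q (x j) = β' j := by
    intro j
    simp only [hx, hβ']
    rw [map_smul, map_sub, phi_ι_mul_ι, phi_algebraMap, add_sub_cancel_right]
  have hanti : ∀ a b : M, ι Q a * ι Q b = algebraMap K _ (2 * gB Q a b) - ι Q b * ι Q a := by
    intro a b
    rw [two_gB, ← ι_mul_ι_add_swap, add_sub_cancel_right]
  -- action on exponentials
  have hact : ∀ (v : M) (t : K) (N : CliffordAlgebra Q), phi Q N = ex k β t →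
      v + t • L v = 0 → ι Q v * N = 0 := by
    intro v t N hN hv
    apply (phi Q).injective
    rw [phi_ι_mul, hN, ct_ex _ hB hk, ι_LL Q hB, ← hL, ← smul_mul_assoc, ← map_smul, ← add_mul,
      ← map_add, hv, map_zero, zero_mul, map_zero]
  have hbx : ∀ j, b j = x j := by
    intro j
    have e1 := phi_outerExp Q B hB k n hk hkn (μs j)⁻¹
    have e2 := phi_outerExp Q B hB k n hk hkn (-(μs j)⁻¹)
    set N := outerExp Q n ((μs j)⁻¹ • B) with hN
    have hneg : outerExp Q n (-((μs j)⁻¹ • B)) = outerExp Q n (-(μs j)⁻¹ • B) := by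
      rw [neg_smul]
    set N' := outerExp Q n (-(μs j)⁻¹ • B) with hN'
    have hwN : ι Q (w j) * N = 0 := hact _ _ _ e1 (by
      rw [hw, smul_smul, mul_neg, inv_mul_cancel₀ (hμ0 j), neg_one_smul, add_neg_cancel])
    have huN : ι Q (u j) * N' = 0 := hact _ _ _ e2 (by
      rw [hu, smul_smul, neg_mul, inv_mul_cancel₀ (hμ0 j), neg_one_smul, add_neg_cancel])
    have hxN : x j * N = μs j • N := by
      simp only [hx]
      rw [smul_mul_assoc, sub_mul, mul_assoc, hwN, mul_zero, zero_sub, ← Algebra.smul_def,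
        smul_neg, smul_smul, hcg, neg_smul, neg_neg]
    have hxN' : x j * N' = - (μs j • N') := by
      simp only [hx]
      rw [hanti, smul_mul_assoc, sub_mul, sub_mul, mul_assoc, huN, mul_zero, sub_zero,
        ← Algebra.smul_def, ← Algebra.smul_def, ← sub_smul, smul_smul]
      have : c j * (2 * gB Q (u j) (w j) - g j) = - μs j := by
        rw [← hcg j]; simp only [hg]; ring
      rw [this, neg_smul]
    have hmain : x j * coW Q n ((μs j)⁻¹ • B) = μs j • siW Q n ((μs j)⁻¹ • B) := by
      rw [coW, siW, hneg, ← hN, mul_smul_comm, mul_add, hxN, hxN', smul_comm (μs j), smul_sub,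
        sub_eq_add_neg]
    rw [hb, ← smul_mul_assoc, ← hmain, mul_assoc, Ring.mul_inverse_cancel _ (hco j), mul_one]
  refine ⟨?_, ?_, ?_⟩
  · apply (phi Q).injective
    rw [map_sum, ← hβ, hdecomp]
    exact Finset.sum_congr rfl fun j _ => by rw [hbx, hphix]
  · intro i j
    rw [hbx, hbx]
    by_cases hij : i = j
    · subst hij; rw [cprod, sub_self, smul_zero]
    have hac : ∀ a b : M, gB Q a b = 0 → ι Q a * ι Q b = - (ι Q b * ι Q a) := by
      intro a b h
      rw [hanti, h, mul_zero, map_zero, zero_sub]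
    have hcomm2 : ∀ a b z : M, gB Q a z = 0 → gB Q b z = 0 → Commute (ι Q a * ι Q b) (ι Q z) := by
      intro a b z h1 h2
      rw [Commute, SemiconjBy, mul_assoc, hac b z h2, mul_neg, ← mul_assoc, hac a z h1, neg_mul,
        neg_neg, mul_assoc]
    have hcm : Commute (ι Q (u i) * ι Q (w i)) (ι Q (u j) * ι Q (w j)) :=
      (hcomm2 _ _ _ (guu i j) (by rw [gB_symm]; exact guw j i (Ne.symm hij))).mul_right
        (hcomm2 _ _ _ (guw i j hij) (gww i j))
    have hx2 : Commute (x i) (x j) := by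
      refine Commute.smul_left (Commute.smul_right ?_ _) _
      refine Commute.sub_left (Commute.sub_right hcm ?_) ?_
      · exact Algebra.commute_algebraMap_right _ _
      · exact Algebra.commute_algebraMap_left _ _
    rw [cprod, hx2.eq, sub_self, smul_zero]
  · intro j
    rw [hbx]
    refine ⟨(isGrade_iff Q 2 _).2 (by rw [hphix]; exact hβ'mem j), c j ^ 2 * g j ^ 2, ?_⟩
    have huu : ι Q (u j) * ι Q (u j) = 0 := by
      rw [ι_sq_scalar, ← gB_self, guu, map_zero]
    have hww : ι Q (w j) * ι Q (w j) = 0 := by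
      rw [ι_sq_scalar, ← gB_self, gww, map_zero]
    have huwuw : ι Q (u j) * ι Q (w j) * (ι Q (u j) * ι Q (w j))
        = (2 * g j) • (ι Q (u j) * ι Q (w j)) := by
      rw [mul_assoc, ← mul_assoc (ι Q (w j)), hanti (w j), sub_mul, mul_assoc, hww, mul_zero,
        sub_zero, ← Algebra.smul_def, mul_smul_comm, gB_symm]
    simp only [hx]
    rw [smul_mul_smul_comm, sub_mul, mul_sub, mul_sub, huwuw, ← Algebra.commutes,
      ← Algebra.smul_def, ← map_mul (algebraMap K (CliffordAlgebra Q)), two_mul, add_smul, add_sub_cancel_right, sub_sub_cancel,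
      Algebra.smul_def, ← map_mul (algebraMap K (CliffordAlgebra Q))]
    congr 1
    ring

end Main

section BC
open TensorProduct
variable {V : Type*} [AddCommGroup V] [Module ℝ V]

/-- base change of the exterior algebra -/
noncomputable def TT (V : Type*) [AddCommGroup V] [Module ℝ V] :
    ExteriorAlgebra ℝ V →ₐ[ℝ] ExteriorAlgebra ℂ (ℂ ⊗[ℝ] V) :=
  ExteriorAlgebra.lift ℝ
    ⟨(ExteriorAlgebra.ι ℂ).restrictScalars ℝ ∘ₗ TensorProduct.mk ℝ ℂ V 1, fun m =>
      ExteriorAlgebra.ι_sq_zero _⟩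

theorem TT_ι (m : V) : TT V (ExteriorAlgebra.ι ℝ m) = ExteriorAlgebra.ι ℂ ((1 : ℂ) ⊗ₜ m) := by
  exact ExteriorAlgebra.lift_ι_apply ℝ _ _ m

theorem TT_ct (d : Module.Dual ℝ V) (d' : Module.Dual ℂ (ℂ ⊗[ℝ] V))
    (h : ∀ m, d' ((1 : ℂ) ⊗ₜ m) = (d m : ℂ)) (x : ExteriorAlgebra ℝ V) :
    TT V (ct d x) = ct d' (TT V x) := by
  induction x using CliffordAlgebra.left_induction with
  | algebraMap r =>
    have e : ct d (algebraMap ℝ (ExteriorAlgebra ℝ V) r) = 0 := ct_algebraMap d r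
    have e2 : TT V (algebraMap ℝ (ExteriorAlgebra ℝ V) r) = algebraMap ℂ _ (r : ℂ) := by
      rw [AlgHom.commutes]; rfl
    have e3 : ct d' (TT V (algebraMap ℝ (ExteriorAlgebra ℝ V) r)) = 0 := by
      rw [e2, ct_algebraMap]
    exact (congrArg (TT V) e).trans ((map_zero _).trans e3.symm)
  | add x y hx hy => rw [map_add, map_add, map_add, map_add, hx, hy]
  | ι_mul x a hx =>
    change TT V (ct d (ExteriorAlgebra.ι ℝ a * x)) = ct d' (TT V (ExteriorAlgebra.ι ℝ a * x))
    rw [ct_ι_mul, map_sub, map_mul, map_mul, map_smul, TT_ι, ct_ι_mul, hx, h]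
    rfl

theorem TT_ext2 {γ : ExteriorAlgebra ℝ V} (hγ : γ ∈ ⋀[ℝ]^2 V) :
    TT V γ ∈ ⋀[ℂ]^2 (ℂ ⊗[ℝ] V) := by
  refine ext2_induction (p := fun γ => TT V γ ∈ ⋀[ℂ]^2 (ℂ ⊗[ℝ] V)) hγ ?_ ?_
  · intro a b
    rw [map_mul, TT_ι, TT_ι, ExteriorAlgebra.exteriorPower, pow_two]
    exact Submodule.mul_mem_mul ⟨_, rfl⟩ ⟨_, rfl⟩
  · intro x y hx hy
    rw [map_add]
    exact add_mem hx hy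

theorem sigQc_tmul (p q r : ℕ) (m : Fin (p + q + r) → ℝ) :
    sigQc p q r ((1 : ℂ) ⊗ₜ m) = (sigQ p q r m : ℂ) := by
  let _ : Invertible (2 : ℝ) := invertibleOfNonzero two_ne_zero
  have := QuadraticForm.baseChange_tmul (A := ℂ) (sigQ p q r) 1 m
  refine this.trans ?_
  simp

theorem gB_sigQc (p q r : ℕ) (a m : Fin (p + q + r) → ℝ) :
    gB (sigQc p q r) ((1 : ℂ) ⊗ₜ a) ((1 : ℂ) ⊗ₜ m) = (gB (sigQ p q r) a m : ℂ) := by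
  have h1 := two_gB (sigQc p q r) ((1 : ℂ) ⊗ₜ a) ((1 : ℂ) ⊗ₜ m)
  have h2 := congrArg (fun z : ℝ => (z : ℂ)) (two_gB (sigQ p q r) a m)
  simp only [QuadraticMap.polar] at h1 h2
  rw [← TensorProduct.tmul_add, sigQc_tmul, sigQc_tmul, sigQc_tmul] at h1
  push_cast at h2
  have := h1.trans h2.symm
  exact mul_left_cancel₀ two_ne_zero this

theorem toC_add (p q r : ℕ) (x y : CliffordAlgebra (sigQ p q r)) :
    toC p q r (x + y) = toC p q r x + toC p q r y := by
  simp only [toC]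
  rw [TensorProduct.tmul_add]
  exact map_add _ _ _

theorem toC_mul (p q r : ℕ) (x y : CliffordAlgebra (sigQ p q r)) :
    toC p q r (x * y) = toC p q r x * toC p q r y := by
  let _ : Invertible (2 : ℝ) := invertibleOfNonzero two_ne_zero
  have h : (1 : ℂ) ⊗ₜ[ℝ] (x * y) = ((1 : ℂ) ⊗ₜ[ℝ] x) * ((1 : ℂ) ⊗ₜ[ℝ] y) := by
    rw [Algebra.TensorProduct.tmul_mul_tmul, one_mul]
  have := map_mul (ofBaseChange ℂ (sigQ p q r)) ((1 : ℂ) ⊗ₜ[ℝ] x) ((1 : ℂ) ⊗ₜ[ℝ] y)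
  rw [← h] at this
  exact this

theorem toC_ι (p q r : ℕ) (a : Fin (p + q + r) → ℝ) :
    toC p q r (ι _ a) = ι (sigQc p q r) ((1 : ℂ) ⊗ₜ a) := by
  let _ : Invertible (2 : ℝ) := invertibleOfNonzero two_ne_zero
  exact ofBaseChange_tmul_ι ℂ (sigQ p q r) 1 a

theorem toC_algebraMap (p q r : ℕ) (s : ℝ) :
    toC p q r (algebraMap ℝ _ s) = algebraMap ℂ (CliffordAlgebra (sigQc p q r)) (s : ℂ) := by
  let _ : Invertible (2 : ℝ) := invertibleOfNonzero two_ne_zero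
  have h : (1 : ℂ) ⊗ₜ[ℝ] (algebraMap ℝ (CliffordAlgebra (sigQ p q r)) s)
      = algebraMap ℂ _ (s : ℂ) := by
    rw [Algebra.algebraMap_eq_smul_one, TensorProduct.tmul_smul, TensorProduct.smul_tmul',
      Algebra.TensorProduct.algebraMap_apply]
    simp
  have := (ofBaseChange ℂ (sigQ p q r)).commutes (s : ℂ)
  rw [← h] at this
  exact this

theorem phi_toC (p q r : ℕ) (x : CliffordAlgebra (sigQ p q r)) :
    phi (sigQc p q r) (toC p q r x) = TT _ (phi (sigQ p q r) x) := by
  induction x using CliffordAlgebra.left_induction with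
  | algebraMap s =>
    rw [toC_algebraMap, phi_algebraMap, phi_algebraMap, AlgHom.commutes]
    rfl
  | add x y hx hy => rw [toC_add, map_add, map_add, map_add, hx, hy]
  | ι_mul x a hx =>
    rw [toC_mul, toC_ι, phi_ι_mul, phi_ι_mul, map_add, map_mul, TT_ι, hx,
      TT_ct _ (gB (sigQc p q r) ((1 : ℂ) ⊗ₜ a)) (gB_sigQc p q r a)]

end BC

end InvDec

open CliffordAlgebra in
/-- Invariant Decomposition: let `B` be a regular bivector (`W_k² ≠ 0`) of
effective dimension `2k` whose spectrum `{±μ₁, …, ±μ_k}` (the roots, with multiplicity, of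
`P_{2k}(μ) = M_μ M̃_μ`) consists of `2k` pairwise distinct (hence nonzero) eigenvalues, and
suppose each outer tangent `ta∧(B/μ_j)` exists.  Then `B = Σ_j b_j` with
`b_j := μ_j · ta∧(B/μ_j)`, and the `b_j` are commuting simple bivectors. -/
theorem invariant_decomposition (p q r : ℕ) (B : CliffordAlgebra (sigQ p q r))
    (hB : IsGrade (sigQ p q r) 2 B) (k : ℕ) (hk : HasEffDim (sigQ p q r) B k)
    (hreg : Wj (sigQ p q r) B k * Wj (sigQ p q r) B k ≠ 0)
    (μs : Fin k → ℂ)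
    (hroots : ∀ μ : ℂ,
      Mpoly (sigQc p q r) (toC p q r B) k μ * reverse (Mpoly (sigQc p q r) (toC p q r B) k μ)
        = algebraMap ℂ (CliffordAlgebra (sigQc p q r)) (∏ i : Fin k, (μ ^ 2 - μs i ^ 2)))
    (hdist₁ : ∀ i j : Fin k, μs i = μs j → i = j)
    (hdist₂ : ∀ i j : Fin k, μs i ≠ -μs j)
    (hco : ∀ j : Fin k, IsUnit (coW (sigQc p q r) (p + q + r) ((μs j)⁻¹ • toC p q r B)))
    (b : Fin k → CliffordAlgebra (sigQc p q r))
    (hb : ∀ j : Fin k, b j = μs j •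
      (siW (sigQc p q r) (p + q + r) ((μs j)⁻¹ • toC p q r B)
        * Ring.inverse (coW (sigQc p q r) (p + q + r) ((μs j)⁻¹ • toC p q r B)))) :
    toC p q r B = ∑ j : Fin k, b j ∧
    (∀ i j : Fin k, cprod (b i) (b j) = 0) ∧
    (∀ j : Fin k, IsGrade (sigQc p q r) 2 (b j) ∧
      ∃ c : ℂ, b j * b j = algebraMap ℂ (CliffordAlgebra (sigQc p q r)) c) := by
  have hBr := (InvDec.isGrade_iff _ _ _).1 hB
  have hpow : InvDec.phi (sigQ p q r) B ^ (k + 1) = 0 := by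
    have h := InvDec.phi_Wj (sigQ p q r) B hBr (k + 1)
    rw [hk.2 (k + 1) (Nat.lt_succ_self k), map_zero, eq_comm, smul_eq_zero] at h
    exact h.resolve_left (inv_ne_zero (Nat.cast_ne_zero.2 (Nat.factorial_ne_zero _)))
  refine InvDec.main_abs (sigQc p q r) (toC p q r B) ?_ k (p + q + r) ?_ ?_ μs hroots hdist₁
    hdist₂ hco b hb
  · rw [InvDec.phi_toC]
    exact InvDec.TT_ext2 hBr
  · rw [InvDec.phi_toC, ← map_pow, hpow, map_zero]
  · rw [Module.finrank_baseChange, Module.finrank_fin_fun]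
end

section
/- If v_μ is an eigenvector of a bivector B in ℝ_{p,q,r} with eigenvalue μ ∈ ℂ, i.e. v_μ ≠ 0 and B × v_μ = μ v_μ, then either μ = 0 or v_μ is null, i.e. v_μ² = 0. -/
open CliffordAlgebra TensorProduct in
/-- if `v` is an eigenvector (in the complexified algebra) of a bivector `B`
with eigenvalue `μ ∈ ℂ`, then either `μ = 0` or `v` is null, i.e. `v² = 0`. -/
theorem eigenvector_null_or_zero_eigenvalue (p q r : ℕ) (B : CliffordAlgebra (sigQ p q r))
    (hB : IsGrade (sigQ p q r) 2 B) (μ : ℂ) (v : ℂ ⊗[ℝ] (Fin (p + q + r) → ℝ))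
    (hv : IsEigen (sigQc p q r) (toC p q r B) μ v) :
    μ = 0 ∨ ι (sigQc p q r) v * ι (sigQc p q r) v = 0 := by
  obtain ⟨-, h⟩ := hv
  unfold cprod at h
  generalize toC p q r B = b at h
  have hc : b * (ι (sigQc p q r) v * ι (sigQc p q r) v)
      = (ι (sigQc p q r) v * ι (sigQc p q r) v) * b := by
    rw [ι_sq_scalar]
    exact (Algebra.commutes _ _).symm
  generalize ι (sigQc p q r) v = w at h hc ⊢
  have h2 : b * w - w * b = (2 * μ) • w := by
    rw [mul_smul, ← h, smul_smul]
    norm_num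
  have h3 : (2 * μ) • (w * w) + (2 * μ) • (w * w) = 0 := by
    have e1 : (2 * μ) • (w * w) = w * (b * w - w * b) := by rw [h2, mul_smul_comm]
    have e2 : (2 * μ) • (w * w) = (b * w - w * b) * w := by rw [h2, smul_mul_assoc]
    have e3 : w * (b * w - w * b) + (b * w - w * b) * w = b * (w * w) - w * w * b := by
      noncomm_ring
    nth_rewrite 1 [e1]
    rw [e2, e3, hc, sub_self]
  rw [← add_smul] at h3
  rcases smul_eq_zero.mp h3 with h4 | h4
  · left
    linear_combination h4 / 4
  · exact Or.inr h4
end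

section
/- Let B be a bivector in ℝ_{p,q,r} with effective dimension 2k and effective pseudoscalar W_k, let v₊ and v₋ be eigenvectors of B with eigenvalues +μ and −μ (μ ≠ 0) such that v₊ · v₋ ≠ 0, and set β_μ := (v₊ ∧ v₋)/(v₊ · v₋). Then: (i) β_μ² = 1; (ii) β_μ × v_± = ± v_±, i.e. v₊ and v₋ are eigenvectors of β_μ with eigenvalues ±1; and (iii) W_k β_μ = β_μ W_k and this product is homogeneous of grade 2k − 2. -/
noncomputable section Helpers

open CliffordAlgebra TensorProduct

namespace PBR

variable {K : Type*} [Field K] [CharZero K] {M : Type*} [AddCommGroup M] [Module K M]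

/-- The module isomorphism to the exterior algebra. -/
def ph (Q : QuadraticForm K M) : CliffordAlgebra Q ≃ₗ[K] ExteriorAlgebra K M :=
  letI : Invertible (2 : K) := invertibleOfNonzero two_ne_zero
  equivExterior Q

/-- The linear form `v · _`. -/
def dl (Q : QuadraticForm K M) (v : M) : Module.Dual K M :=
  (2 : K)⁻¹ • (QuadraticMap.polarBilin Q v)

theorem dl_apply (Q : QuadraticForm K M) (v w : M) : dl Q v w = vdot Q v w := by
  simp [dl, vdot]

theorem vdot_comm (Q : QuadraticForm K M) (v w : M) : vdot Q v w = vdot Q w v := by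
  simp [vdot, QuadraticMap.polar_comm]

theorem ph_algebraMap (Q : QuadraticForm K M) (r : K) :
    ph Q (algebraMap K _ r) = algebraMap K _ r := by
  letI : Invertible (2 : K) := invertibleOfNonzero two_ne_zero
  exact changeForm_algebraMap changeForm.associated_neg_proof r

theorem ph_ι (Q : QuadraticForm K M) (v : M) : ph Q (ι Q v) = ExteriorAlgebra.ι K v := by
  letI : Invertible (2 : K) := invertibleOfNonzero two_ne_zero
  exact changeForm_ι changeForm.associated_neg_proof v

theorem ph_contractLeft (Q : QuadraticForm K M) (d : Module.Dual K M) (x : CliffordAlgebra Q) :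
    ph Q (contractLeft d x) = contractLeft (Q := 0) d (ph Q x) := by
  letI : Invertible (2 : K) := invertibleOfNonzero two_ne_zero
  exact changeForm_contractLeft changeForm.associated_neg_proof d x

theorem ph_ι_mul (Q : QuadraticForm K M) (v : M) (x : CliffordAlgebra Q) :
    ph Q (ι Q v * x) = ExteriorAlgebra.ι K v * ph Q x + contractLeft (Q := 0) (dl Q v) (ph Q x) := by
  letI : Invertible (2 : K) := invertibleOfNonzero two_ne_zero
  have h := changeForm_ι_mul (changeForm.associated_neg_proof (Q := Q)) v x
  have e : QuadraticMap.associated (R := K) (-Q) v = - dl Q v := by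
    ext w
    simp [dl, QuadraticMap.associated_apply, QuadraticMap.polar]
  rw [e] at h
  have h' : ph Q (ι Q v * x) = ExteriorAlgebra.ι K v * ph Q x
      - contractLeft (Q := 0) (-dl Q v) (ph Q x) := h
  rw [h', map_neg, LinearMap.neg_apply, sub_neg_eq_add]

theorem gradeProj_eq (Q : QuadraticForm K M) (l : ℕ) (x : CliffordAlgebra Q) :
    ph Q (gradeProj Q l x) =
      (DirectSum.decompose (fun n : ℕ => ⋀[K]^n M) (ph Q x) l : ExteriorAlgebra K M) := by
  unfold gradeProj ph
  exact LinearEquiv.apply_symm_apply _ _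

theorem isGrade_iff (Q : QuadraticForm K M) (l : ℕ) (x : CliffordAlgebra Q) :
    IsGrade Q l x ↔ ph Q x ∈ ⋀[K]^l M := by
  unfold IsGrade
  rw [← (ph Q).injective.eq_iff, gradeProj_eq]
  constructor
  · intro h
    rw [← h]
    exact SetLike.coe_mem _
  · intro h
    exact DirectSum.decompose_of_mem_same (fun n : ℕ => ⋀[K]^n M) h

theorem ι_mem (v : M) : ExteriorAlgebra.ι K v ∈ ⋀[K]^1 M := by
  rw [ExteriorAlgebra.exteriorPower, pow_one]; exact ⟨v, rfl⟩

theorem mul_mem' {i j n : ℕ} {x y : ExteriorAlgebra K M} (hx : x ∈ ⋀[K]^i M)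
    (hy : y ∈ ⋀[K]^j M) (h : i + j = n) : x * y ∈ ⋀[K]^n M := by
  subst h
  exact SetLike.GradedMul.mul_mem (A := fun n : ℕ => ⋀[K]^n M) hx hy

theorem pow_mem' {x : ExteriorAlgebra K M} (hx : x ∈ ⋀[K]^2 M) (j : ℕ) :
    x ^ j ∈ ⋀[K]^(2 * j) M := by
  induction j with
  | zero =>
    rw [pow_zero]; exact SetLike.GradedOne.one_mem (A := fun n : ℕ => ⋀[K]^n M)
  | succ j ih => rw [pow_succ]; exact mul_mem' ih hx (by ring)

theorem contract_mem_aux (d : Module.Dual K M) {i : ℕ} {x : ExteriorAlgebra K M}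
    (hx : x ∈ ⋀[K]^i M) :
    contractLeft (Q := 0) d x ∈ ⋀[K]^(i - 1) M ∧ (i = 0 → contractLeft (Q := 0) d x = 0) := by
  induction hx using Submodule.pow_induction_on_left' with
  | algebraMap r =>
    have := contractLeft_algebraMap (0 : QuadraticForm K M) d r
    exact ⟨by erw [this]; exact zero_mem _, fun _ => this⟩
  | add x y i hx hy ihx ihy =>
    refine ⟨?_, fun h => ?_⟩
    · rw [map_add]; exact add_mem ihx.1 ihy.1
    · rw [map_add, ihx.2 h, ihy.2 h, add_zero]
  | mem_mul m hm i x hx ih =>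
    obtain ⟨m, rfl⟩ := hm
    refine ⟨?_, fun h => by simp at h⟩
    have := contractLeft_ι_mul (Q := (0 : QuadraticForm K M)) d m x
    erw [this]
    refine sub_mem (Submodule.smul_mem _ _ hx) ?_
    rcases Nat.eq_zero_or_pos i with h | h
    · rw [ih.2 h, mul_zero]; exact zero_mem _
    · exact mul_mem' (ι_mem m) ih.1 (by omega)

theorem contract_mem (d : Module.Dual K M) {i : ℕ} {x : ExteriorAlgebra K M}
    (hx : x ∈ ⋀[K]^i M) : contractLeft (Q := 0) d x ∈ ⋀[K]^(i - 1) M :=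
  (contract_mem_aux d hx).1

/-- Induction principle for bivectors of the exterior algebra. -/
theorem biv_induction {p : ExteriorAlgebra K M → Prop}
    (hm : ∀ u w, p (ExteriorAlgebra.ι K u * ExteriorAlgebra.ι K w))
    (ha : ∀ x y, p x → p y → p (x + y)) {b : ExteriorAlgebra K M} (hb : b ∈ ⋀[K]^2 M) : p b := by
  rw [ExteriorAlgebra.exteriorPower, pow_two] at hb
  refine Submodule.mul_induction_on hb ?_ ha
  rintro _ ⟨u, rfl⟩ _ ⟨w, rfl⟩
  exact hm u w

theorem ι_anticomm (u w : M) : ExteriorAlgebra.ι K u * ExteriorAlgebra.ι K w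
    = - (ExteriorAlgebra.ι K w * ExteriorAlgebra.ι K u) :=
  eq_neg_of_add_eq_zero_left (ExteriorAlgebra.ι_add_mul_swap u w)

theorem biv_comm {b : ExteriorAlgebra K M} (hb : b ∈ ⋀[K]^2 M) (v : M) :
    b * ExteriorAlgebra.ι K v = ExteriorAlgebra.ι K v * b := by
  refine biv_induction (p := fun b => b * ExteriorAlgebra.ι K v = ExteriorAlgebra.ι K v * b)
    ?_ ?_ hb
  · intro u w
    rw [mul_assoc, ι_anticomm w v, mul_neg, ← mul_assoc, ι_anticomm u v, neg_mul, neg_neg,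
      mul_assoc]
  · intro x y hx hy
    rw [add_mul, mul_add, hx, hy]

theorem biv_deriv (d : Module.Dual K M) {b : ExteriorAlgebra K M} (hb : b ∈ ⋀[K]^2 M)
    (y : ExteriorAlgebra K M) :
    contractLeft (Q := 0) d (b * y) =
      contractLeft (Q := 0) d b * y + b * contractLeft (Q := 0) d y := by
  refine biv_induction (p := fun b => contractLeft (Q := 0) d (b * y) =
      contractLeft (Q := 0) d b * y + b * contractLeft (Q := 0) d y) ?_ ?_ hb
  · intro u w
    rw [mul_assoc]
    have h1 := fun m x => contractLeft_ι_mul (Q := (0 : QuadraticForm K M)) d m x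
    have h2 := fun m => contractLeft_ι (0 : QuadraticForm K M) d m
    change contractLeft d (ι 0 u * (ι 0 w * y)) = contractLeft d (ι 0 u * ι 0 w) * y +
      ι 0 u * ι 0 w * contractLeft d y
    rw [h1, h1, h1, h2]
    rw [← Algebra.commutes, ← Algebra.smul_def, mul_sub, sub_mul, smul_mul_assoc, smul_mul_assoc,
      mul_smul_comm, mul_assoc]
    abel
  · intro x y hx hy
    rw [add_mul, map_add, map_add, hx, hy, add_mul, add_mul]
    abel

theorem biv_deriv_pow (d : Module.Dual K M) {b : ExteriorAlgebra K M} (hb : b ∈ ⋀[K]^2 M)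
    (v : M) (h : contractLeft (Q := 0) d b = ExteriorAlgebra.ι K v) (n : ℕ) :
    contractLeft (Q := 0) d (b ^ (n + 1)) = ((n : K) + 1) • (ExteriorAlgebra.ι K v * b ^ n) := by
  induction n with
  | zero => simp [h]
  | succ n ih =>
    rw [pow_succ' b (n + 1), biv_deriv d hb, ih, h, mul_smul_comm, ← mul_assoc, biv_comm hb,
      mul_assoc, ← pow_succ']
    push_cast
    module

/-- Filtration. -/
def F (n : ℕ) : Submodule K (ExteriorAlgebra K M) := ⨆ i : {i : ℕ // i ≤ n}, ⋀[K]^(i : ℕ) M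

theorem mem_F {n i : ℕ} (h : i ≤ n) {x : ExteriorAlgebra K M} (hx : x ∈ ⋀[K]^i M) :
    x ∈ F (K := K) (M := M) n :=
  Submodule.mem_iSup_of_mem (p := fun i : {i : ℕ // i ≤ n} => ⋀[K]^(i : ℕ) M) ⟨i, h⟩ hx

theorem F_induction {n : ℕ} {p : ExteriorAlgebra K M → Prop}
    (hm : ∀ i ≤ n, ∀ x ∈ ⋀[K]^i M, p x) (h0 : p 0)
    (ha : ∀ x y, p x → p y → p (x + y)) {x : ExteriorAlgebra K M}
    (hx : x ∈ F (K := K) (M := M) n) : p x :=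
  Submodule.iSup_induction _ (motive := p) hx (fun i x hx => hm i.1 i.2 x hx) h0 ha

theorem F_mono {m n : ℕ} (h : m ≤ n) {x : ExteriorAlgebra K M}
    (hx : x ∈ F (K := K) (M := M) m) : x ∈ F (K := K) (M := M) n :=
  F_induction (fun _ hi _ hx => mem_F (hi.trans h) hx) (zero_mem _) (fun _ _ => add_mem) hx

theorem F_contract (d : Module.Dual K M) {n : ℕ} {x : ExteriorAlgebra K M}
    (hx : x ∈ F (K := K) (M := M) n) : contractLeft (Q := 0) d x ∈ F (K := K) (M := M) (n - 1) :=
  F_induction (p := fun x => contractLeft (Q := 0) d x ∈ F (K := K) (M := M) (n - 1))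
    (fun i hi _ hx => mem_F (by omega) (contract_mem d hx)) (by simp)
    (fun x y hx hy => by rw [map_add]; exact add_mem hx hy) hx

theorem F_mul {i n m : ℕ} {b x : ExteriorAlgebra K M} (hb : b ∈ ⋀[K]^i M)
    (hx : x ∈ F (K := K) (M := M) n) (h : i + n ≤ m) : b * x ∈ F (K := K) (M := M) m :=
  F_induction (p := fun x => b * x ∈ F (K := K) (M := M) m)
    (fun j hj _ hx => mem_F (i := i + j) (by omega) (mul_mem' hb hx rfl)) (by simp)
    (fun x y hx hy => by rw [mul_add]; exact add_mem hx hy) hx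

theorem F_comp {n l : ℕ} (h : n < l) {x : ExteriorAlgebra K M}
    (hx : x ∈ F (K := K) (M := M) n) :
    (DirectSum.decompose (fun n : ℕ => ⋀[K]^n M) x l : ExteriorAlgebra K M) = 0 :=
  F_induction (p := fun x =>
      (DirectSum.decompose (fun n : ℕ => ⋀[K]^n M) x l : ExteriorAlgebra K M) = 0)
    (fun j hj _ hx => DirectSum.decompose_of_mem_ne (fun n : ℕ => ⋀[K]^n M) hx (by omega))
    (by simp)
    (fun x y hx hy => by simp [DirectSum.decompose_add, hx, hy]) hx

theorem ph_symm_mul (Q : QuadraticForm K M) (u w : M) :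
    (ph Q).symm (ExteriorAlgebra.ι K u * ExteriorAlgebra.ι K w)
      = ι Q u * ι Q w - algebraMap K _ (vdot Q u w) := by
  rw [LinearEquiv.symm_apply_eq, map_sub, ph_algebraMap, ph_ι_mul, ph_ι]
  have := contractLeft_ι (0 : QuadraticForm K M) (dl Q u) w
  erw [this]
  rw [dl_apply, add_sub_cancel_right]

theorem top_step (Q : QuadraticForm K M) {b : ExteriorAlgebra K M} (hb : b ∈ ⋀[K]^2 M)
    {n : ℕ} (y : CliffordAlgebra Q) (hy : ph Q y ∈ F (K := K) (M := M) n) :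
    ph Q ((ph Q).symm b * y) - b * ph Q y ∈ F (K := K) (M := M) n := by
  refine biv_induction (p := fun b =>
    ph Q ((ph Q).symm b * y) - b * ph Q y ∈ F (K := K) (M := M) n) ?_ ?_ hb
  · intro u w
    rw [ph_symm_mul, sub_mul, map_sub, mul_assoc, ph_ι_mul, ph_ι_mul, ← Algebra.smul_def,
      map_smul, mul_add, map_add]
    have h1 := contractLeft_ι_mul (Q := (0 : QuadraticForm K M)) (dl Q u) w (ph Q y)
    have e : contractLeft (Q := 0) (dl Q u) (ExteriorAlgebra.ι K w * ph Q y)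
        = vdot Q u w • ph Q y - ExteriorAlgebra.ι K w * contractLeft (Q := 0) (dl Q u) (ph Q y) := by
      rw [← dl_apply]; exact h1
    rw [e]
    have key : ∀ d : Module.Dual K M, ∀ u : M,
        ExteriorAlgebra.ι K u * contractLeft (Q := 0) d (ph Q y) ∈ F (K := K) (M := M) n := by
      intro d u
      refine F_induction (p := fun x => ExteriorAlgebra.ι K u * contractLeft (Q := 0) d x ∈
        F (K := K) (M := M) n) ?_ (by simp)
        (fun x y hx hy => by rw [map_add, mul_add]; exact add_mem hx hy) hy
      intro i hi x hx
      rcases Nat.eq_zero_or_pos i with h | h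
      · rw [(contract_mem_aux d hx).2 h, mul_zero]; exact zero_mem _
      · exact mem_F hi (mul_mem' (ι_mem u) (contract_mem d hx) (by omega))
    have k3 : contractLeft (Q := 0) (dl Q u) (contractLeft (Q := 0) (dl Q w) (ph Q y)) ∈
        F (K := K) (M := M) n := F_mono (by omega) (F_contract _ (F_contract _ hy))
    have := add_mem (sub_mem (key (dl Q w) u) (key (dl Q u) w)) k3
    convert this using 1
    rw [mul_assoc]
    abel
  · intro x z hx hz
    rw [map_add, add_mul, map_add, add_mul]
    convert add_mem hx hz using 1
    abel

theorem top_pow (Q : QuadraticForm K M) {B : CliffordAlgebra Q} (hB : ph Q B ∈ ⋀[K]^2 M) (j : ℕ) :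
    ∃ z ∈ F (K := K) (M := M) (2 * j - 1), ph Q (B ^ j) = (ph Q B) ^ j + z ∧ (j = 0 → z = 0) := by
  induction j with
  | zero =>
    refine ⟨0, zero_mem _, ?_, fun _ => rfl⟩
    simpa using ph_algebraMap Q 1
  | succ j ih =>
    obtain ⟨z, hz, h, h0⟩ := ih
    have hF : ph Q (B ^ j) ∈ F (K := K) (M := M) (2 * j) := by
      rw [h]
      exact add_mem (mem_F le_rfl (pow_mem' hB j)) (F_mono (by omega) hz)
    have hs := top_step Q hB (B ^ j) hF
    rw [LinearEquiv.symm_apply_apply, ← pow_succ'] at hs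
    refine ⟨ph Q (B ^ (j + 1)) - ph Q B ^ (j + 1), ?_, by abel, by simp⟩
    have e : ph Q (B ^ (j + 1)) - ph Q B ^ (j + 1) =
        (ph Q (B ^ (j + 1)) - ph Q B * ph Q (B ^ j)) + ph Q B * z := by
      rw [h, mul_add, ← pow_succ' (ph Q B) j]; abel
    rw [e]
    refine add_mem (F_mono (by omega) hs) ?_
    rcases Nat.eq_zero_or_pos j with hj | hj
    · rw [h0 hj, mul_zero]; exact zero_mem _
    · exact F_mul hB hz (by omega)

theorem ph_Wj (Q : QuadraticForm K M) {B : CliffordAlgebra Q} (hB : ph Q B ∈ ⋀[K]^2 M) (j : ℕ) :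
    ph Q (Wj Q B j) = ((j.factorial : K)⁻¹) • (ph Q B) ^ j := by
  obtain ⟨z, hz, h, h0⟩ := top_pow Q hB j
  rw [Wj, map_smul, gradeProj_eq, h, DirectSum.decompose_add, DirectSum.add_apply,
    Submodule.coe_add, DirectSum.decompose_of_mem_same (fun n : ℕ => ⋀[K]^n M) (pow_mem' hB j)]
  rcases Nat.eq_zero_or_pos j with hj | hj
  · simp [h0 hj]
  · rw [F_comp (by omega) hz, add_zero]

theorem involute_contract (Q : QuadraticForm K M) (d : Module.Dual K M) (x : CliffordAlgebra Q) :
    involute (contractLeft d x) = - contractLeft d (involute x) := by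
  induction x using CliffordAlgebra.left_induction with
  | algebraMap r => simp
  | add x y hx hy => simp only [map_add, hx, hy]; abel
  | ι_mul x m hx =>
    simp only [contractLeft_ι_mul, map_sub, map_smul, map_mul, involute_ι, hx, neg_mul, map_neg,
      mul_neg]
    abel

theorem ph_involute (Q : QuadraticForm K M) (x : CliffordAlgebra Q) :
    ph Q (involute x) = involute (Q := 0) (ph Q x) := by
  induction x using CliffordAlgebra.left_induction with
  | algebraMap r =>
    rw [AlgHom.commutes, ph_algebraMap]
    exact (AlgHom.commutes (involute (Q := (0 : QuadraticForm K M))) r).symm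
  | add x y hx hy => simp only [map_add, hx, hy]
  | ι_mul x m hx =>
    have e : involute (Q := 0) (ExteriorAlgebra.ι K m) = - ExteriorAlgebra.ι K m :=
      involute_ι (Q := (0 : QuadraticForm K M)) m
    have e2 := involute_contract (0 : QuadraticForm K M) (dl Q m) (ph Q x)
    rw [map_mul, involute_ι, neg_mul, map_neg, ph_ι_mul, ph_ι_mul, map_add]
    erw [e2, map_mul, e]
    rw [hx, neg_mul, neg_add]

theorem involute_even (Q : QuadraticForm K M) {k : ℕ} {b : ExteriorAlgebra K M}
    (hb : b ∈ ⋀[K]^2 M) {x : CliffordAlgebra Q} {c : K} (hx : ph Q x = c • b ^ k) :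
    involute x = x := by
  apply (ph Q).injective
  rw [ph_involute, hx]
  have e : involute (Q := 0) b = b := by
    refine biv_induction (p := fun b => involute (Q := 0) b = b) ?_ ?_ hb
    · intro u w
      change involute (ι 0 u * ι 0 w) = ι 0 u * ι 0 w
      simp
    · intro x y hx hy
      rw [map_add, hx, hy]
  rw [map_smul, map_pow, e]

theorem ι_mul_sub (Q : QuadraticForm K M) (v : M) (x : CliffordAlgebra Q) :
    ι Q v * x - involute x * ι Q v = (2 : K) • contractLeft (dl Q v) x := by
  induction x using CliffordAlgebra.left_induction with
  | algebraMap r =>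
    rw [AlgHom.commutes, contractLeft_algebraMap, smul_zero, ← Algebra.commutes, sub_self]
  | add x y hx hy =>
    rw [map_add, map_add, smul_add, ← hx, ← hy, mul_add, add_mul]; abel
  | ι_mul x m hx =>
    rw [contractLeft_ι_mul, map_mul, involute_ι, smul_sub, ← mul_smul_comm, ← hx, dl_apply,
      ← mul_assoc, ι_mul_ι_comm, smul_smul, vdot, mul_inv_cancel_left₀ two_ne_zero,
      Algebra.smul_def]
    noncomm_ring

theorem main_gen (Q : QuadraticForm K M) (B : CliffordAlgebra Q) (hB : ph Q B ∈ ⋀[K]^2 M) (k : ℕ)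
    (hW : (ph Q B) ^ (k + 1) = 0) (μ : K) (hμ : μ ≠ 0) (vp vm : M)
    (hvp : IsEigen Q B μ vp) (hvm : IsEigen Q B (-μ) vm) (hd : vdot Q vp vm ≠ 0)
    (β : CliffordAlgebra Q)
    (hβ : β = (vdot Q vp vm)⁻¹ • gradeProj Q 2 (ι Q vp * ι Q vm)) :
    β * β = 1 ∧ cprod β (ι Q vp) = ι Q vp ∧ cprod β (ι Q vm) = -ι Q vm ∧
    Wj Q B k * β = β * Wj Q B k ∧ IsGrade Q (2 * k - 2) (Wj Q B k * β) := by
  have h2 : (2 : K) ≠ 0 := two_ne_zero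
  -- eigenvectors
  have comm : ∀ (ν : K) (v : M), IsEigen Q B ν v →
      B * ι Q v = ι Q v * B + (2 * ν) • ι Q v := by
    intro ν v hv
    have := hv.2
    rw [cprod, inv_smul_eq_iff₀ h2, sub_eq_iff_eq_add'] at this
    rw [this, smul_smul]
  have null : ∀ (ν : K) (v : M), ν ≠ 0 → IsEigen Q B ν v → ι Q v * ι Q v = 0 := by
    intro ν v hν hv
    have h := comm ν v hv
    have h1 : B * (ι Q v * ι Q v) = (ι Q v * ι Q v) * B := by
      rw [ι_sq_scalar, Algebra.commutes]
    rw [← mul_assoc, h, add_mul, mul_assoc, h, mul_add, mul_assoc, add_assoc, add_eq_left,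
      mul_smul_comm, smul_mul_assoc, ← add_smul] at h1
    refine (smul_eq_zero.1 h1).resolve_left ?_
    rw [← two_mul]
    exact mul_ne_zero h2 (mul_ne_zero h2 hν)
  have wed : ∀ (ν : K) (v : M), ν ≠ 0 → IsEigen Q B ν v →
      ExteriorAlgebra.ι K v * ph Q (Wj Q B k) = 0 := by
    intro ν v hν hv
    have h := comm ν v hv
    have h1 := ι_mul_sub Q v B
    rw [involute_even Q hB (k := 1) (c := 1) (by simp), h] at h1
    have h3 : contractLeft (dl Q v) B = ι Q (-ν • v) := by
      apply smul_right_injective _ h2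
      simp only
      rw [← h1, map_smul, smul_smul]
      module
    have h4 : contractLeft (Q := 0) (dl Q v) (ph Q B) = ExteriorAlgebra.ι K (-ν • v) := by
      rw [← ph_contractLeft, h3, ph_ι]
    have h5 := biv_deriv_pow (dl Q v) hB _ h4 k
    rw [hW, map_zero, map_smul, smul_mul_assoc, smul_smul] at h5
    have h6 := (smul_eq_zero.1 h5.symm).resolve_left
      (mul_ne_zero (by exact_mod_cast Nat.succ_ne_zero k) (neg_ne_zero.2 hν))
    rw [ph_Wj Q hB, mul_smul_comm, h6, smul_zero]
  have con : ∀ (ν : K) (v : M), ν ≠ 0 → IsEigen Q B ν v →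
      ι Q v * Wj Q B k = contractLeft (dl Q v) (Wj Q B k) ∧
      Wj Q B k * ι Q v = - (ι Q v * Wj Q B k) := by
    intro ν v hν hv
    have h1 : ι Q v * Wj Q B k = contractLeft (dl Q v) (Wj Q B k) := by
      apply (ph Q).injective
      rw [ph_ι_mul, ph_contractLeft, wed ν v hν hv, zero_add]
    refine ⟨h1, ?_⟩
    have h3 := ι_mul_sub Q v (Wj Q B k)
    rw [involute_even Q hB (ph_Wj Q hB k), ← h1, sub_eq_iff_eq_add] at h3
    rw [eq_neg_iff_add_eq_zero]
    have : ι Q v * Wj Q B k + (Wj Q B k * ι Q v + ι Q v * Wj Q B k) = ι Q v * Wj Q B k := by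
      refine Eq.trans ?_ h3.symm
      rw [two_smul]; abel
    exact add_eq_left.1 this
  have hμ' : -μ ≠ 0 := neg_ne_zero.2 hμ
  have np := null μ vp hμ hvp
  have nm := null (-μ) vm hμ' hvm
  obtain ⟨cp, ap⟩ := con μ vp hμ hvp
  obtain ⟨cm, am⟩ := con (-μ) vm hμ' hvm
  have wp := wed μ vp hμ hvp
  clear con wed null comm
  -- formula for β
  have hg : gradeProj Q 2 (ι Q vp * ι Q vm) = ι Q vp * ι Q vm - algebraMap K _ (vdot Q vp vm) := by
    rw [← ph_symm_mul]
    apply (ph Q).injective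
    have e : ph Q (ι Q vp * ι Q vm) = ExteriorAlgebra.ι K vp * ExteriorAlgebra.ι K vm
        + algebraMap K _ (vdot Q vp vm) := by
      have := ph_symm_mul Q vp vm
      rw [LinearEquiv.symm_apply_eq, map_sub, ph_algebraMap] at this
      rw [this]; abel
    rw [gradeProj_eq, e, LinearEquiv.apply_symm_apply, DirectSum.decompose_add,
      DirectSum.add_apply, Submodule.coe_add,
      DirectSum.decompose_of_mem_same (fun n : ℕ => ⋀[K]^n M)
        (mul_mem' (ι_mem vp) (ι_mem vm) rfl),
      DirectSum.decompose_of_mem_ne (fun n : ℕ => ⋀[K]^n M) (i := 0) ?_ (by omega), add_zero]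
    exact SetLike.algebraMap_mem_graded (fun n : ℕ => ⋀[K]^n M) _
  rw [hg] at hβ
  have sw : ι Q vm * ι Q vp = (2 * vdot Q vp vm) • 1 - ι Q vp * ι Q vm := by
    rw [ι_mul_ι_comm, vdot, mul_inv_cancel_left₀ h2, QuadraticMap.polar_comm,
      Algebra.algebraMap_eq_smul_one]
  rw [Algebra.algebraMap_eq_smul_one] at hβ
  have hv1 : dl Q vm vp = vdot Q vp vm := by rw [dl_apply, vdot_comm]
  generalize vdot Q vp vm = c at *
  have pmp : ι Q vp * ι Q vm * ι Q vp = (2 * c) • ι Q vp := by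
    rw [mul_assoc, sw, mul_sub, ← mul_assoc, np]; simp
  have mpm : ι Q vm * ι Q vp * ι Q vm = (2 * c) • ι Q vm := by
    rw [sw, sub_mul, mul_assoc, nm]; simp
  have ppm : ι Q vp * (ι Q vp * ι Q vm) = 0 := by rw [← mul_assoc, np, zero_mul]
  have pmm : ι Q vp * ι Q vm * ι Q vm = 0 := by rw [mul_assoc, nm, mul_zero]
  have comW : Wj Q B k * β = β * Wj Q B k := by
    have : Wj Q B k * (ι Q vp * ι Q vm) = (ι Q vp * ι Q vm) * Wj Q B k := by
      rw [← mul_assoc, ap, neg_mul, mul_assoc, am, mul_neg, neg_neg, mul_assoc]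
    rw [hβ, mul_smul_comm, smul_mul_assoc, mul_sub, sub_mul, this]
    simp
  refine ⟨?_, ?_, ?_, comW, ?_⟩
  · have : (ι Q vp * ι Q vm) * (ι Q vp * ι Q vm) = (2 * c) • (ι Q vp * ι Q vm) := by
      rw [← mul_assoc, pmp, smul_mul_assoc]
    rw [hβ, smul_mul_smul_comm, sub_mul, mul_sub, mul_sub, this]
    simp only [mul_smul_comm, smul_mul_assoc, mul_one, one_mul]
    have : (2 * c) • (ι Q vp * ι Q vm) - c • (ι Q vp * ι Q vm) -
      (c • (ι Q vp * ι Q vm) - c • c • (1 : CliffordAlgebra Q)) = (c * c) • 1 := by module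
    rw [this, smul_smul]
    field_simp
    simp
  · rw [cprod, hβ, smul_mul_assoc, mul_smul_comm, sub_mul, mul_sub, pmp, ppm]
    simp only [mul_smul_comm, smul_mul_assoc, mul_one, one_mul, ← smul_sub, smul_smul]
    match_scalars
    field_simp
    ring
  · rw [cprod, hβ, smul_mul_assoc, mul_smul_comm, sub_mul, mul_sub, pmm, ← mul_assoc, mpm]
    simp only [mul_smul_comm, smul_mul_assoc, mul_one, one_mul, ← smul_sub, smul_smul]
    match_scalars
    field_simp
    ring
  · rw [comW, isGrade_iff, hβ, smul_mul_assoc, map_smul]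
    refine Submodule.smul_mem _ _ ?_
    rw [sub_mul, mul_assoc, cm, map_sub, ph_ι_mul, ph_contractLeft, smul_mul_assoc, one_mul,
      map_smul]
    have h1 : contractLeft (Q := 0) (dl Q vm) (ExteriorAlgebra.ι K vp * ph Q (Wj Q B k)) =
        dl Q vm vp • ph Q (Wj Q B k) -
          ExteriorAlgebra.ι K vp * contractLeft (Q := 0) (dl Q vm) (ph Q (Wj Q B k)) :=
      contractLeft_ι_mul (Q := (0 : QuadraticForm K M)) (dl Q vm) vp (ph Q (Wj Q B k))
    rw [wp, map_zero, hv1, eq_comm, sub_eq_zero] at h1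
    rw [← h1, add_sub_cancel_left]
    have hw : ph Q (Wj Q B k) ∈ ⋀[K]^(2 * k) M := by
      rw [ph_Wj Q hB]; exact Submodule.smul_mem _ _ (pow_mem' hB k)
    exact contract_mem _ (contract_mem _ hw)

/-- The real-linear algebra map between exterior algebras. -/
def extC (V : Type*) [AddCommGroup V] [Module ℝ V] :
    ExteriorAlgebra ℝ V →ₐ[ℝ] ExteriorAlgebra ℂ (ℂ ⊗[ℝ] V) :=
  ExteriorAlgebra.lift ℝ ⟨((ExteriorAlgebra.ι ℂ).restrictScalars ℝ) ∘ₗ TensorProduct.mk ℝ ℂ V 1,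
    fun _ => ExteriorAlgebra.ι_sq_zero _⟩

theorem extC_ι (V : Type*) [AddCommGroup V] [Module ℝ V] (v : V) :
    extC V (ExteriorAlgebra.ι ℝ v) = ExteriorAlgebra.ι ℂ (1 ⊗ₜ v) := by
  exact ExteriorAlgebra.lift_ι_apply ℝ _ _ v

/-- `toC` as an algebra map. -/
def toCA (p q r : ℕ) : CliffordAlgebra (sigQ p q r) →ₐ[ℝ] CliffordAlgebra (sigQc p q r) :=
  letI : Invertible (2 : ℝ) := invertibleOfNonzero two_ne_zero
  ofBaseChangeAux ℂ (sigQ p q r)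

theorem toC_eq (p q r : ℕ) (x : CliffordAlgebra (sigQ p q r)) : toC p q r x = toCA p q r x := by
  letI : Invertible (2 : ℝ) := invertibleOfNonzero two_ne_zero
  change ofBaseChange ℂ (sigQ p q r) ((1 : ℂ) ⊗ₜ x) = ofBaseChangeAux ℂ (sigQ p q r) x
  refine (Algebra.TensorProduct.lift_tmul _ _ _ _ _).trans ?_
  rw [map_one, one_mul]

theorem toCA_ι (p q r : ℕ) (v) :
    toCA p q r (ι (sigQ p q r) v) = ι (sigQc p q r) (1 ⊗ₜ v) := by
  letI : Invertible (2 : ℝ) := invertibleOfNonzero two_ne_zero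
  exact ofBaseChangeAux_ι ℂ (sigQ p q r) v

theorem vdot_C (p q r : ℕ) (u w) :
    vdot (sigQc p q r) (1 ⊗ₜ u) (1 ⊗ₜ w) = ((vdot (sigQ p q r) u w : ℝ) : ℂ) := by
  have h : ∀ v, sigQc p q r (1 ⊗ₜ v) = (sigQ p q r v : ℂ) := by
    intro v
    letI : Invertible (2 : ℝ) := invertibleOfNonzero two_ne_zero
    change (sigQ p q r).baseChange ℂ (1 ⊗ₜ v) = _
    rw [QuadraticForm.baseChange_tmul]
    simp
  simp only [vdot, QuadraticMap.polar, ← TensorProduct.tmul_add, h]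
  push_cast
  rfl

theorem ph_toC (p q r : ℕ) {b} (hb : b ∈ ⋀[ℝ]^2 (Fin (p + q + r) → ℝ)) :
    ph (sigQc p q r) (toCA p q r ((ph (sigQ p q r)).symm b)) = extC _ b ∧
      extC _ b ∈ ⋀[ℂ]^2 (ℂ ⊗[ℝ] (Fin (p + q + r) → ℝ)) := by
  refine biv_induction (p := fun b =>
    ph (sigQc p q r) (toCA p q r ((ph (sigQ p q r)).symm b)) = extC _ b ∧
      extC _ b ∈ ⋀[ℂ]^2 (ℂ ⊗[ℝ] (Fin (p + q + r) → ℝ))) ?_ ?_ hb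
  · intro u w
    constructor
    · rw [ph_symm_mul, map_sub, map_mul, map_mul, toCA_ι, toCA_ι, extC_ι, extC_ι,
        ← LinearEquiv.eq_symm_apply, ph_symm_mul, vdot_C, AlgHom.commutes]
      rw [IsScalarTower.algebraMap_apply ℝ ℂ (CliffordAlgebra (sigQc p q r))]
      rfl
    · rw [map_mul, extC_ι, extC_ι]
      exact mul_mem' (ι_mem _) (ι_mem _) rfl
  · intro x y hx hy
    simp only [map_add]
    exact ⟨by rw [hx.1, hy.1], add_mem hx.2 hy.2⟩

end PBR

end Helpers

open CliffordAlgebra TensorProduct in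
/-- let `v₊, v₋` be eigenvectors of `B` with eigenvalues `±μ` (`μ ≠ 0`) and
`v₊ · v₋ ≠ 0`, and set `β_μ := (v₊ ∧ v₋)/(v₊ · v₋)`.  Then (i) `β_μ² = 1`;
(ii) `β_μ × v₊ = v₊` and `β_μ × v₋ = -v₋`; (iii) `W_k β_μ = β_μ W_k` and this product is
homogeneous of grade `2k - 2`. -/
theorem pairing_bireflection_properties (p q r : ℕ) (B : CliffordAlgebra (sigQ p q r))
    (hB : IsGrade (sigQ p q r) 2 B) (k : ℕ) (hk : HasEffDim (sigQ p q r) B k)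
    (μ : ℂ) (hμ : μ ≠ 0) (vp vm : ℂ ⊗[ℝ] (Fin (p + q + r) → ℝ))
    (hvp : IsEigen (sigQc p q r) (toC p q r B) μ vp)
    (hvm : IsEigen (sigQc p q r) (toC p q r B) (-μ) vm)
    (hd : vdot (sigQc p q r) vp vm ≠ 0)
    (β : CliffordAlgebra (sigQc p q r))
    (hβ : β = (vdot (sigQc p q r) vp vm)⁻¹ •
      gradeProj (sigQc p q r) 2 (ι (sigQc p q r) vp * ι (sigQc p q r) vm)) :
    β * β = 1 ∧
    cprod β (ι (sigQc p q r) vp) = ι (sigQc p q r) vp ∧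
    cprod β (ι (sigQc p q r) vm) = -ι (sigQc p q r) vm ∧
    Wj (sigQc p q r) (toC p q r B) k * β = β * Wj (sigQc p q r) (toC p q r B) k ∧
    IsGrade (sigQc p q r) (2 * k - 2) (Wj (sigQc p q r) (toC p q r B) k * β) := by

  have hb := (PBR.isGrade_iff _ _ _).1 hB
  have h := PBR.ph_toC p q r hb
  rw [LinearEquiv.symm_apply_apply, ← PBR.toC_eq] at h
  have hw := PBR.ph_Wj _ hb (k + 1)
  rw [hk.2 (k + 1) (Nat.lt_succ_self k), map_zero] at hw
  have hw' := (smul_eq_zero.1 hw.symm).resolve_left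
    (inv_ne_zero (Nat.cast_ne_zero.2 (Nat.factorial_ne_zero _)))
  refine PBR.main_gen (sigQc p q r) (toC p q r B) (by rw [h.1]; exact h.2) k ?_ μ hμ vp vm
    hvp hvm hd β hβ
  rw [h.1, ← map_pow, hw', map_zero]
end
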